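/- Let 1 < p ≤ 2 and let τ : D → D be injective. If for every Banach space E with the UMD property the operator T_{τ,p} ⊗ Id_E is bounded on L^p_E, then the inverse rearrangement operator is bounded on dyadic H¹, i.e. ‖T_{τ,1}^{−1}‖₁ < ∞. -/

import Mathlib

open MeasureTheory Set
open scoped ENNReal NNReal Classical

noncomputable section

/-- A dyadic subinterval of `[0,1)`: the half-open interval
`[k/2^n, (k+1)/2^n)` with `k < 2^n`. -/
structure DyadicI where
  n : ℕ
  k : ℕ
  hk : k < 2 ^ n

instance : Nonempty DyadicI := ⟨⟨0, 0, by norm_num⟩⟩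

namespace DyadicI

/-- The length `|I| = 2^{-n}` of a dyadic interval. -/
def len (I : DyadicI) : ℝ := (2 : ℝ) ^ (-(I.n : ℤ))

/-- The left endpoint `k 2^{-n}` of a dyadic interval. -/
def lep (I : DyadicI) : ℝ := (I.k : ℝ) * I.len

/-- The underlying point set `[k/2^n, (k+1)/2^n)` of a dyadic interval. -/
def toSet (I : DyadicI) : Set ℝ := Set.Ico I.lep (I.lep + I.len)

/-- The `L^∞`-normalized Haar function `h_I`: `1` on the left half of `I`,
`-1` on the right half of `I`, `0` off `I`. -/
def haar (I : DyadicI) (t : ℝ) : ℝ :=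
  if t ∈ Set.Ico I.lep (I.lep + I.len / 2) then 1
  else if t ∈ Set.Ico (I.lep + I.len / 2) (I.lep + I.len) then -1
  else 0

end DyadicI

open DyadicI

section Defs

variable {X : Type*} [NormedAddCommGroup X] [NormedSpace ℝ X]

/-- The square function `𝕊(f)` of the `X`-valued Haar expansion `f = ∑_{I ∈ s} x_I h_I`:
`𝕊(f)(t) = (E_ε ‖∑_I ε_I x_I h_I(t)‖²)^{1/2}`, the average being taken over all
choices of signs `ε_I ∈ {±1}`, `I ∈ s`. -/
def sqFn (s : Finset DyadicI) (x : DyadicI → X) (t : ℝ) : ℝ :=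
  Real.sqrt ((∑ ε : {I // I ∈ s} → Bool,
    ‖∑ I ∈ s.attach, ((if ε I then (1 : ℝ) else -1) * haar I.1 t) • x I.1‖ ^ 2) /
      2 ^ s.card)

/-- The `H^p_X` (quasi-)norm of `f = ∑_{I ∈ s} x_I h_I`:
`‖f‖ = (∫₀¹ 𝕊(f)(t)^p dt)^{1/p}`. -/
def HpNormV (p : ℝ) (s : Finset DyadicI) (x : DyadicI → X) : ℝ :=
  (∫ t in Set.Icc (0 : ℝ) 1, sqFn s x t ^ p) ^ (1 / p)

/-- The coefficients of `(T_{τ,p} ⊗ Id_X)(f)` for `f = ∑_{I ∈ s} x_I h_I`, namely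
`(T_{τ,p} ⊗ Id_X)(f) = ∑_{I ∈ s} (|I|/|τ(I)|)^{1/p} x_I h_{τ(I)}`, as a family of
coefficients indexed by the Haar support `τ(s)`. -/
def rearrCoef (τ : DyadicI → DyadicI) (p : ℝ) (s : Finset DyadicI) (x : DyadicI → X) :
    DyadicI → X :=
  fun J => ∑ I ∈ s, if τ I = J then ((len I / len (τ I)) ^ (1 / p)) • x I else 0

/-- The scalar dyadic square function `S(f) = (∑_I a_I² 1_I)^{1/2}`
of `f = ∑_{I ∈ s} a_I h_I`. -/
def sqFnS (s : Finset DyadicI) (a : DyadicI → ℝ) (t : ℝ) : ℝ :=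
  Real.sqrt (∑ I ∈ s, a I ^ 2 * Set.indicator (toSet I) (fun _ => (1 : ℝ)) t)

/-- The scalar dyadic `H^p` (quasi-)norm `‖f‖_{H^p} = ‖S(f)‖_{L^p[0,1]}`. -/
def HpNormS (p : ℝ) (s : Finset DyadicI) (a : DyadicI → ℝ) : ℝ :=
  (∫ t in Set.Icc (0 : ℝ) 1, sqFnS s a t ^ p) ^ (1 / p)

/-- The coefficients of the scalar rearrangement operator `T_{τ,p}` applied to
`f = ∑_{I ∈ s} a_I h_I`; `T_{τ,p}` is determined by
`T_{τ,p}(h_I/|I|^{1/p}) = h_{τ(I)}/|τ(I)|^{1/p}`. -/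
def rearrCoefS (τ : DyadicI → DyadicI) (p : ℝ) (s : Finset DyadicI) (a : DyadicI → ℝ) :
    DyadicI → ℝ :=
  fun J => ∑ I ∈ s, if τ I = J then ((len I / len (τ I)) ^ (1 / p)) * a I else 0

/-- The operator norm `‖T_{τ,p} ⊗ Id_X : H^p_X → H^p_X‖ ∈ [0,∞]`, computed as the
supremum over finitely supported `f` in the unit ball of `H^p_X`. -/
def hpOpNorm (τ : DyadicI → DyadicI) (p : ℝ) (X : Type*) [NormedAddCommGroup X]
    [NormedSpace ℝ X] : ℝ≥0∞ :=
  ⨆ (s : Finset DyadicI) (x : DyadicI → X) (_ : HpNormV p s x ≤ 1),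
    ENNReal.ofReal (HpNormV p (s.image τ) (rearrCoef τ p s x))

/-- The scalar operator norm `‖T_{τ,p} : H^p → H^p‖ ∈ [0,∞]`. -/
def hpOpNormS (τ : DyadicI → DyadicI) (p : ℝ) : ℝ≥0∞ :=
  ⨆ (s : Finset DyadicI) (a : DyadicI → ℝ) (_ : HpNormS p s a ≤ 1),
    ENNReal.ofReal (HpNormS p (s.image τ) (rearrCoefS τ p s a))

/-- For `H = τ(L)` (so that `σ(J) = I` for `J = τ(I)`, `I ∈ L`), the maximal function
`μ_H(t) = sup_{J ∈ H} (|σ(J)|/|J|) 1_J(t) = sup_{I ∈ L} (|I|/|τ(I)|) 1_{τ(I)}(t)`,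
as an `[0,∞]`-valued function. -/
def muSet (τ : DyadicI → DyadicI) (L : Set DyadicI) (t : ℝ) : ℝ≥0∞ :=
  ⨆ (I : DyadicI) (_ : I ∈ L),
    ENNReal.ofReal (len I / len (τ I) * Set.indicator (toSet (τ I)) (fun _ => (1 : ℝ)) t)

/-- For `H = τ(L)` with `L` finite, the (real-valued) maximal function
`μ_H(t) = max_{I ∈ L} (|I|/|τ(I)|) 1_{τ(I)}(t)`. -/
def muFin (τ : DyadicI → DyadicI) (L : Finset DyadicI) (t : ℝ) : ℝ :=
  ((L.sup fun I =>
    Real.toNNReal (len I / len (τ I) * Set.indicator (toSet (τ I)) (fun _ => (1 : ℝ)) t) : ℝ≥0) : ℝ)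

/-- The point set `L* = ⋃_{I ∈ L} I` covered by a collection of dyadic intervals. -/
def pointSet (L : Set DyadicI) : Set ℝ := ⋃ I ∈ L, toSet I

/-- The constant `C₁ = sup_{H ⊆ τ(D), H ≠ ∅} (1/|σ(H)*|) ∫₀¹ μ_H(t) dt`, where
nonempty collections `H ⊆ τ(D)` are parametrized as `H = τ(L)` for nonempty `L ⊆ D`,
so that `σ(H)* = L*`. -/
def Cone (τ : DyadicI → DyadicI) : ℝ≥0∞ :=
  ⨆ (L : Set DyadicI) (_ : L.Nonempty),
    (∫⁻ t in Set.Icc (0 : ℝ) 1, muSet τ L t) / volume (pointSet L)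

/-- The square of the dyadic BMO norm of `g = ∑_{J ∈ s} a_J h_J`:
`‖g‖_{BMO}² = sup_{I ∈ D} (1/|I|) ∑_{J ⊆ I} a_J² |J|`. -/
def bmoSq (s : Finset DyadicI) (a : DyadicI → ℝ) : ℝ≥0∞ :=
  ⨆ I : DyadicI, ENNReal.ofReal
    ((∑ J ∈ s.filter fun J => toSet J ⊆ toSet I, a J ^ 2 * len J) / len I)

/-- The coefficients of `S_σ(g)` for `g = ∑_{J ∈ s} a_J h_J`, where `σ = τ⁻¹` on `τ(D)`:
`S_σ(h_J) = h_{σ(J)}` for `J ∈ τ(D)` and `S_σ(h_J) = 0` otherwise, so that the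
coefficient of `h_K` in `S_σ(g)` is `a_{τ(K)}` if `τ(K) ∈ s`, and `0` otherwise. -/
def sSigmaCoef (τ : DyadicI → DyadicI) (s : Finset DyadicI) (a : DyadicI → ℝ) :
    DyadicI → ℝ :=
  fun K => if τ K ∈ s then a (τ K) else 0

/-- The Haar support of `S_σ(g)` for `g` with Haar support `s`:
`σ(s ∩ τ(D))`, i.e. the preimage under `τ` of `s`. -/
def sSigmaSupp (τ : DyadicI → DyadicI) (s : Finset DyadicI) : Finset DyadicI :=
  (s.filter fun J => J ∈ Set.range τ).image (Function.invFun τ)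

/-- The operator norm `‖S_σ‖_{BMO} ∈ [0,∞]` of `S_σ` with respect to the dyadic BMO
norm, computed over finitely supported Haar expansions. -/
def bmoOpNorm (τ : DyadicI → DyadicI) : ℝ≥0∞ :=
  ⨆ (s : Finset DyadicI) (a : DyadicI → ℝ) (_ : bmoSq s a ≤ 1),
    (bmoSq (sSigmaSupp τ s) (sSigmaCoef τ s a)) ^ (1 / 2 : ℝ)

/-- The Carleson constant `⟦C⟧ = sup_{I ∈ C} (1/|I|) ∑_{J ∈ C, J ⊆ I} |J| ∈ [0,∞]`
of a collection of dyadic intervals. -/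
def carleson (C : Set DyadicI) : ℝ≥0∞ :=
  ⨆ (I : DyadicI) (_ : I ∈ C),
    (∑' J : {J : DyadicI // J ∈ C ∧ toSet J ⊆ toSet I}, ENNReal.ofReal (len J.1)) /
      ENNReal.ofReal (len I)

/-- The `L^p_X = L^p([0,1]; X)` (Bochner) norm of `f = ∑_{I ∈ s} x_I h_I`. -/
def LpNormV (p : ℝ) (s : Finset DyadicI) (x : DyadicI → X) : ℝ :=
  (∫ t in Set.Icc (0 : ℝ) 1, ‖∑ I ∈ s, haar I t • x I‖ ^ p) ^ (1 / p)

/-- The operator norm `‖T_{τ,p} ⊗ Id_X : L^p_X → L^p_X‖ ∈ [0,∞]`, computed over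
finitely supported Haar expansions. -/
def lpOpNorm (τ : DyadicI → DyadicI) (p : ℝ) (X : Type*) [NormedAddCommGroup X]
    [NormedSpace ℝ X] : ℝ≥0∞ :=
  ⨆ (s : Finset DyadicI) (x : DyadicI → X) (_ : LpNormV p s x ≤ 1),
    ENNReal.ofReal (LpNormV p (s.image τ) (rearrCoef τ p s x))

/-- The operator norm `‖T_{τ,p}^{-1} ⊗ Id_X‖ ∈ [0,∞]` on the span of
`{h_J : J ∈ τ(D)}` with the `L^p_X` norm: the map determined by
`x h_{τ(I)}/|τ(I)|^{1/p} ↦ x h_I/|I|^{1/p}`, i.e. sending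
`g = ∑_{I ∈ L} x_I h_{τ(I)}` to `∑_{I ∈ L} (|τ(I)|/|I|)^{1/p} x_I h_I`. -/
def lpInvOpNorm (τ : DyadicI → DyadicI) (p : ℝ) (X : Type*) [NormedAddCommGroup X]
    [NormedSpace ℝ X] : ℝ≥0∞ :=
  ⨆ (L : Finset DyadicI) (x : DyadicI → X)
    (_ : LpNormV p (L.image τ) (fun J => ∑ I ∈ L, if τ I = J then x I else 0) ≤ 1),
    ENNReal.ofReal (LpNormV p L fun I => ((len (τ I) / len I) ^ (1 / p)) • x I)

/-- The operator norm `‖T_{τ,1}^{-1}‖₁ ∈ [0,∞]` on the span of `{h_J : J ∈ τ(D)}`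
with the dyadic `H¹` norm: the map determined by `h_{τ(I)}/|τ(I)| ↦ h_I/|I|`,
i.e. sending `g = ∑_{I ∈ L} a_I h_{τ(I)}` to `∑_{I ∈ L} (|τ(I)|/|I|) a_I h_I`. -/
def h1InvOpNorm (τ : DyadicI → DyadicI) : ℝ≥0∞ :=
  ⨆ (L : Finset DyadicI) (a : DyadicI → ℝ)
    (_ : HpNormS 1 (L.image τ) (fun J => ∑ I ∈ L, if τ I = J then a I else 0) ≤ 1),
    ENNReal.ofReal (HpNormS 1 L fun I => (len (τ I) / len I) * a I)

/-- The Rademacher average `(E_ε ‖∑_{i<n} ε_i a_i‖^p)^{1/p}` over all choices of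
signs `ε_i ∈ {±1}`. -/
def radAvg (p : ℝ) {Y : Type*} [NormedAddCommGroup Y] [NormedSpace ℝ Y] (n : ℕ)
    (a : Fin n → Y) : ℝ :=
  ((∑ ε : Fin n → Bool, ‖∑ i, (if ε i then (1 : ℝ) else -1) • a i‖ ^ p) / 2 ^ n) ^ (1 / p)

/-- The type-`p` constant `Type_p(Y) ∈ [0,∞]`: the least `C` such that
`(E_ε ‖∑ ε_i a_i‖^p)^{1/p} ≤ C (∑ ‖a_i‖^p)^{1/p}` for all finite families in `Y`. -/
def typeConst (p : ℝ) (Y : Type*) [NormedAddCommGroup Y] [NormedSpace ℝ Y] : ℝ≥0∞ :=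
  sInf {C : ℝ≥0∞ | ∀ (n : ℕ) (a : Fin n → Y),
    ENNReal.ofReal (radAvg p n a) ≤ C * ENNReal.ofReal ((∑ i, ‖a i‖ ^ p) ^ (1 / p))}

/-- The UMD property of a Banach space `E`: for each `1 < r < ∞` the Haar system is
unconditional in `L^r_E`. -/
def IsUMD (E : Type*) [NormedAddCommGroup E] [NormedSpace ℝ E] : Prop :=
  ∀ r : ℝ, 1 < r → ∃ β : ℝ, ∀ (s : Finset DyadicI) (x : DyadicI → E) (ε : DyadicI → ℝ),
    (∀ I, ε I = 1 ∨ ε I = -1) →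
    LpNormV r s (fun I => ε I • x I) ≤ β * LpNormV r s x

/-- `B` is a block in `L` with top `I`: `B ⊆ L`, `I` is the unique maximal interval
of `B`, and `B` is order-convex in `L` between its elements and `I`. -/
def IsBlock (L : Set DyadicI) (B : Set DyadicI) (I : DyadicI) : Prop :=
  B ⊆ L ∧ I ∈ B ∧ (∀ J ∈ B, toSet J ⊆ toSet I) ∧
    ∀ J ∈ B, ∀ K ∈ L, toSet J ⊆ toSet K → toSet K ⊆ toSet I → K ∈ B

/-- `G₁(K | E)`: the maximal dyadic intervals of `E` strictly contained in `K`. -/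
def gen1 (K : DyadicI) (E : Set DyadicI) : Set DyadicI :=
  {J | J ∈ E ∧ toSet J ⊂ toSet K ∧
    ∀ J' ∈ E, toSet J' ⊂ toSet K → toSet J ⊆ toSet J' → J' = J}

end Defs

section PartA

/-! ### Dyadic basics -/

lemma len_pos (I : DyadicI) : 0 < len I := by unfold len; positivity

lemma len_eq (I : DyadicI) : len I = 1 / 2 ^ I.n := by
  unfold len; rw [zpow_neg, zpow_natCast, one_div]

lemma mem_toSet_iff (I : DyadicI) (t : ℝ) :
    t ∈ toSet I ↔ 0 ≤ t ∧ ⌊2 ^ I.n * t⌋₊ = I.k := by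
  have hp : (0 : ℝ) < 2 ^ I.n := by positivity
  unfold toSet lep
  rw [len_eq, Set.mem_Ico, mul_one_div, ← add_div, div_le_iff₀ hp, lt_div_iff₀ hp]
  constructor
  · rintro ⟨h1, h2⟩
    have h0 : 0 ≤ t * 2 ^ I.n := le_trans (Nat.cast_nonneg _) h1
    refine ⟨nonneg_of_mul_nonneg_left h0 hp, ?_⟩
    rw [mul_comm, Nat.floor_eq_iff h0]
    exact ⟨h1, h2⟩
  · rintro ⟨h0, h⟩
    rw [mul_comm, Nat.floor_eq_iff (by positivity)] at h
    exact h

lemma floor_level {t : ℝ} {n N : ℕ} (h : n ≤ N) :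
    ⌊2 ^ n * t⌋₊ = ⌊2 ^ N * t⌋₊ / 2 ^ (N - n) := by
  have := Nat.floor_div_natCast (2 ^ N * t) (2 ^ (N - n))
  rw [← this]
  congr 1
  push_cast
  rw [eq_div_iff (by positivity)]
  have : (2 : ℝ) ^ N = 2 ^ n * 2 ^ (N - n) := by rw [← pow_add]; congr 1; omega
  rw [this]; ring

lemma haar_eq (I : DyadicI) {t : ℝ} (ht : 0 ≤ t) :
    haar I t = if ⌊2 ^ (I.n + 1) * t⌋₊ = 2 * I.k then 1
      else if ⌊2 ^ (I.n + 1) * t⌋₊ = 2 * I.k + 1 then -1 else 0 := by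
  have hp : (0 : ℝ) < 2 ^ I.n := by positivity
  unfold haar lep
  have e1 : t ∈ Set.Ico (I.k * len I) (I.k * len I + len I / 2) ↔
      ⌊2 ^ (I.n + 1) * t⌋₊ = 2 * I.k := by
    rw [Nat.floor_eq_iff (by positivity), len_eq, Set.mem_Ico, mul_one_div, div_le_iff₀ hp,
      div_div, div_add_div _ _ hp.ne' (by positivity), lt_div_iff₀ (by positivity)]
    push_cast
    rw [pow_succ]
    constructor
    · rintro ⟨h1, h2⟩
      refine ⟨by nlinarith, ?_⟩
      by_contra hc; push Not at hc
      nlinarith [mul_le_mul_of_nonneg_left hc hp.le]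
    · rintro ⟨h1, h2⟩
      refine ⟨by nlinarith, ?_⟩
      nlinarith [mul_lt_mul_of_pos_left h2 hp]
  have e2 : t ∈ Set.Ico (I.k * len I + len I / 2) (I.k * len I + len I) ↔
      ⌊2 ^ (I.n + 1) * t⌋₊ = 2 * I.k + 1 := by
    rw [Nat.floor_eq_iff (by positivity), len_eq, Set.mem_Ico, mul_one_div, ← add_div,
      lt_div_iff₀ hp, div_div, div_add_div _ _ hp.ne' (by positivity), div_le_iff₀ (by positivity)]
    push_cast
    rw [pow_succ]
    constructor
    · rintro ⟨h1, h2⟩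
      refine ⟨?_, by nlinarith⟩
      by_contra hc; push Not at hc
      nlinarith [mul_lt_mul_of_pos_left hc hp]
    · rintro ⟨h1, h2⟩
      refine ⟨?_, by nlinarith⟩
      nlinarith [mul_le_mul_of_nonneg_left h1 hp.le]
  simp only [e1, e2]

/-- indicator -/
def ind (I : DyadicI) (t : ℝ) : ℝ := Set.indicator (toSet I) (fun _ => (1 : ℝ)) t

lemma ind_eq (I : DyadicI) (t : ℝ) : ind I t = if t ∈ toSet I then 1 else 0 := by
  unfold ind; rw [Set.indicator_apply]

lemma ind_nonneg (I : DyadicI) (t : ℝ) : 0 ≤ ind I t := by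
  rw [ind_eq]; split_ifs <;> norm_num

lemma abs_haar (I : DyadicI) (t : ℝ) : |haar I t| = ind I t := by
  have := len_pos I
  rw [ind_eq]; unfold haar toSet
  simp only [Set.mem_Ico]
  split_ifs <;> simp <;> grind

lemma toSet_sub {J K : DyadicI} {t : ℝ} (hJ : t ∈ toSet J) (hK : t ∈ toSet K) (h : K.n ≤ J.n) :
    toSet J ⊆ toSet K := by
  intro u hu
  rw [mem_toSet_iff] at *
  refine ⟨hu.1, ?_⟩
  rw [floor_level h, hu.2, ← hJ.2, ← floor_level h, hK.2]

lemma lep_mem (J : DyadicI) : lep J ∈ toSet J := by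
  unfold toSet; have := len_pos J; simp [this]

lemma n_le_of_sub {J K : DyadicI} (h : toSet J ⊆ toSet K) : K.n ≤ J.n := by
  unfold toSet at h
  rw [Set.Ico_subset_Ico_iff (by linarith [len_pos J])] at h
  have hl : len J ≤ len K := by linarith [h.1, h.2]
  rw [len_eq, len_eq, one_div_le_one_div (by positivity) (by positivity)] at hl
  exact (pow_le_pow_iff_right₀ (by norm_num)).1 hl

lemma eq_of_mem {J K : DyadicI} {t : ℝ} (hJ : t ∈ toSet J) (hK : t ∈ toSet K) (h : K.n = J.n) :
    J = K := by
  rw [mem_toSet_iff] at *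
  have : J.k = K.k := by rw [← hJ.2, ← hK.2, h]
  cases J; cases K; simp_all

/-! ### Step functions -/

def Step (N : ℕ) (F : ℝ → ℝ) : Prop :=
  ∀ t u, 0 ≤ t → 0 ≤ u → ⌊2 ^ N * t⌋₊ = ⌊2 ^ N * u⌋₊ → F t = F u

/-- grid point -/
def gp (N m : ℕ) : ℝ := (m : ℝ) / 2 ^ N

lemma gp_nonneg (N m : ℕ) : 0 ≤ gp N m := by unfold gp; positivity

lemma floor_gp (N m : ℕ) : ⌊2 ^ N * gp N m⌋₊ = m := by
  unfold gp; rw [mul_div_cancel₀ _ (by positivity)]; simp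

/-- average over the grid -/
def av (N : ℕ) (F : ℝ → ℝ) : ℝ := (∑ m ∈ Finset.range (2 ^ N), F (gp N m)) / 2 ^ N

lemma integral_step {N : ℕ} {F : ℝ → ℝ} (hF : Step N F) :
    ∫ t in Set.Icc (0 : ℝ) 1, F t = av N F := by
  have hcell : ∀ m : ℕ, ∀ᵐ x, x ∈ Set.uIoc (gp N m) (gp N (m + 1)) → F x = F (gp N m) := by
    intro m
    have : ∀ᵐ x : ℝ, x ≠ gp N (m + 1) := by
      rw [ae_iff]; simp
    filter_upwards [this] with x hx hx2
    have hle : gp N m ≤ gp N (m + 1) := by unfold gp; gcongr; linarith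
    rw [Set.uIoc_of_le hle] at hx2
    have hx0 : 0 ≤ x := (gp_nonneg _ _).trans hx2.1.le
    refine hF _ _ hx0 (gp_nonneg _ _) ?_
    rw [floor_gp, Nat.floor_eq_iff (by positivity)]
    have h1 := hx2.1
    have h2 := lt_of_le_of_ne hx2.2 hx
    unfold gp at h1 h2
    rw [div_lt_iff₀ (by positivity)] at h1
    rw [lt_div_iff₀ (by positivity)] at h2
    push_cast at h2
    constructor <;> linarith
  have hInt : ∀ m < 2 ^ N, IntervalIntegrable F volume (gp N m) (gp N (m + 1)) := by
    intro m _
    refine (intervalIntegrable_const (c := F (gp N m))).congr_ae ?_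
    rw [Filter.EventuallyEq, ae_restrict_iff' measurableSet_uIoc]
    filter_upwards [hcell m] with x hx h
    exact (hx h).symm
  have hs := intervalIntegral.sum_integral_adjacent_intervals (a := gp N) hInt
  have h0 : gp N 0 = 0 := by simp [gp]
  have h1 : gp N (2 ^ N) = 1 := by simp [gp]
  rw [h0, h1, intervalIntegral.integral_of_le zero_le_one] at hs
  rw [integral_Icc_eq_integral_Ioc, ← hs, av, Finset.sum_div]
  refine Finset.sum_congr rfl fun m _ => ?_
  rw [intervalIntegral.integral_congr_ae (hcell m), intervalIntegral.integral_const]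
  unfold gp; push_cast; simp only [smul_eq_mul]; ring

lemma step_ind {N : ℕ} {I : DyadicI} (h : I.n ≤ N) : Step N (ind I) := by
  intro t t' ht ht' e
  rw [ind_eq, ind_eq]
  simp only [mem_toSet_iff, ht, ht', true_and, floor_level h, e]

lemma step_haar {N : ℕ} {I : DyadicI} (h : I.n < N) : Step N (haar I) := by
  intro t t' ht ht' e
  rw [haar_eq I ht, haar_eq I ht']
  simp only [floor_level (Nat.succ_le_of_lt h), e]

lemma av_ind {N : ℕ} {I : DyadicI} (h : I.n ≤ N) : av N (ind I) = len I := by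
  rw [← integral_step (step_ind h)]
  have hsub : toSet I ⊆ Set.Icc 0 1 := by
    intro t ht
    refine ⟨((mem_toSet_iff _ _).1 ht).1, ?_⟩
    refine ht.2.le.trans ?_
    unfold lep
    rw [len_eq, mul_one_div, ← add_div, div_le_one (by positivity)]
    exact_mod_cast I.hk
  have : (fun t => ind I t) = Set.indicator (toSet I) (fun _ => (1 : ℝ)) := rfl
  rw [this, setIntegral_indicator (by unfold toSet; exact measurableSet_Ico),
    Set.inter_eq_self_of_subset_right hsub]
  simp [toSet, (len_pos I).le, Measure.real]

lemma av_mono {N : ℕ} {F G : ℝ → ℝ} (h : ∀ t, 0 ≤ t → F t ≤ G t) : av N F ≤ av N G := by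
  unfold av; gcongr with m; exact h _ (gp_nonneg _ _)

lemma av_congr {N : ℕ} {F G : ℝ → ℝ} (h : ∀ t, 0 ≤ t → F t = G t) : av N F = av N G := by
  unfold av; congr 1; refine Finset.sum_congr rfl fun m _ => h _ (gp_nonneg _ _)

lemma av_nonneg {N : ℕ} {F : ℝ → ℝ} (h : ∀ t, 0 ≤ t → 0 ≤ F t) : 0 ≤ av N F := by
  unfold av; exact div_nonneg (Finset.sum_nonneg fun m _ => h _ (gp_nonneg N m)) (by positivity)

lemma av_sum {ι : Type*} {N : ℕ} (s : Finset ι) (F : ι → ℝ → ℝ) :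
    av N (fun t => ∑ i ∈ s, F i t) = ∑ i ∈ s, av N (F i) := by
  unfold av; rw [Finset.sum_comm, Finset.sum_div]

lemma av_const_mul {N : ℕ} (c : ℝ) (F : ℝ → ℝ) :
    av N (fun t => c * F t) = c * av N F := by
  unfold av; rw [← Finset.mul_sum, mul_div_assoc]

lemma av_mul_const {N : ℕ} (c : ℝ) (F : ℝ → ℝ) :
    av N (fun t => F t * c) = av N F * c := by
  simp_rw [mul_comm _ c]; exact av_const_mul c F

lemma av_sum_ind {N : ℕ} (s : Finset DyadicI) (hs : ∀ I ∈ s, I.n ≤ N) (c : DyadicI → ℝ) :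
    av N (fun t => ∑ I ∈ s, c I * ind I t) = ∑ I ∈ s, c I * len I := by
  rw [av_sum]; refine Finset.sum_congr rfl fun I hI => ?_
  rw [av_const_mul, av_ind (hs I hI)]

end PartA

section PartB

/-! ### Finite dyadic martingales -/

lemma young_aux {r u w : ℝ} (hr : 1 < r) (hu : 0 ≤ u) (hw : 0 ≤ w) :
    u * w ^ (r - 1) ≤ u ^ r / r + (1 - 1 / r) * w ^ r := by
  have hc : r.HolderConjugate (r / (r - 1)) := Real.HolderConjugate.conjExponent hr
  have h := Real.young_inequality_of_nonneg hu (Real.rpow_nonneg hw (r - 1)) hc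
  have h1 : r - 1 ≠ 0 := by linarith
  have h2 : r ≠ 0 := by linarith
  rw [← Real.rpow_mul hw, mul_div_cancel₀ _ h1] at h
  refine h.trans (le_of_eq ?_)
  congr 1
  field_simp

structure DTree where
  N : ℕ
  Ω : Type
  fin : Fintype Ω
  s : ℕ → Ω → ℝ
  fl : ℕ → Ω → Ω
  fl_inv : ∀ k ω, fl k (fl k ω) = ω
  s_sq : ∀ k ω, s k ω = 1 ∨ s k ω = -1
  s_fl : ∀ k ω, k < N → s k (fl k ω) = - s k ω
  s_fl' : ∀ k j ω, k < j → j < N → s k (fl j ω) = s k ω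

instance (T : DTree) : Fintype T.Ω := T.fin

def DTree.Pred (T : DTree) {X : Type*} (k : ℕ) (w : T.Ω → X) : Prop :=
  ∀ j, k ≤ j → j < T.N → ∀ ω, w (T.fl j ω) = w ω

lemma DTree.sum_fl (T : DTree) (k : ℕ) (G : T.Ω → ℝ) : ∑ ω, G (T.fl k ω) = ∑ ω, G ω :=
  Equiv.sum_comp (Function.Involutive.toPerm (T.fl k) (T.fl_inv k)) G

variable {E : Type*} [NormedAddCommGroup E] [NormedSpace ℝ E]

def DTree.F (T : DTree) (v : ℕ → T.Ω → E) (n : ℕ) (ω : T.Ω) : E :=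
  ∑ k ∈ Finset.range n, T.s k ω • v k ω

lemma DTree.F_succ (T : DTree) (v : ℕ → T.Ω → E) (n : ℕ) (ω : T.Ω) :
    T.F v (n + 1) ω = T.F v n ω + T.s n ω • v n ω := Finset.sum_range_succ _ _

lemma DTree.F_zero (T : DTree) (v : ℕ → T.Ω → E) (ω : T.Ω) : T.F v 0 ω = 0 := by
  simp [DTree.F]

lemma DTree.Pred.mono {T : DTree} {X : Type*} {k l : ℕ} {w : T.Ω → X} (h : T.Pred k w)
    (hkl : k ≤ l) : T.Pred l w := fun j hj hN ω => h j (hkl.trans hj) hN ω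

lemma DTree.norm_s (T : DTree) (k : ℕ) (ω : T.Ω) (x : E) : ‖T.s k ω • x‖ = ‖x‖ := by
  rcases T.s_sq k ω with h | h <;> simp [h]

lemma DTree.F_pred (T : DTree) {v : ℕ → T.Ω → E} (hv : ∀ k, T.Pred k (v k)) (n : ℕ) :
    T.Pred n (T.F v n) := by
  intro j hj hN ω
  unfold DTree.F
  refine Finset.sum_congr rfl fun k hk => ?_
  have hk := Finset.mem_range.1 hk
  rw [T.s_fl' k j ω (by omega) hN, hv k j (by omega) hN]

lemma DTree.submart (T : DTree) {v : ℕ → T.Ω → E} (hv : ∀ k, T.Pred k (v k)) {k : ℕ}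
    (hk : k < T.N) (w : T.Ω → ℝ) (hw : T.Pred k w) (hw0 : ∀ ω, 0 ≤ w ω) :
    ∑ ω, w ω * ‖T.F v k ω‖ ≤ ∑ ω, w ω * ‖T.F v (k + 1) ω‖ := by
  have h1 := T.sum_fl k (fun ω => w ω * ‖T.F v (k + 1) ω‖)
  have h2 : ∑ ω, w ω * ‖T.F v k ω‖ * 2 ≤
      ∑ ω, (w ω * ‖T.F v (k + 1) ω‖ + w (T.fl k ω) * ‖T.F v (k + 1) (T.fl k ω)‖) := by
    refine Finset.sum_le_sum fun ω _ => ?_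
    rw [hw k le_rfl hk, T.F_succ, T.F_succ, T.F_pred hv k k le_rfl hk, T.s_fl k ω hk,
      hv k k le_rfl hk, ← mul_add, mul_assoc]
    refine mul_le_mul_of_nonneg_left ?_ (hw0 ω)
    have := norm_add_le (T.F v k ω + T.s k ω • v k ω) (T.F v k ω + (-T.s k ω) • v k ω)
    rw [show (T.F v k ω + T.s k ω • v k ω) + (T.F v k ω + (-T.s k ω) • v k ω)
      = (2 : ℝ) • T.F v k ω by rw [neg_smul, two_smul]; abel, norm_smul] at this
    norm_num at this
    rw [neg_smul]
    linarith
  rw [Finset.sum_add_distrib, h1, ← Finset.sum_mul] at h2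
  linarith

/-- running maximum -/
def mx (u : ℕ → ℝ) : ℕ → ℝ
  | 0 => u 0
  | n + 1 => max (mx u n) (u (n + 1))

lemma mx_le {u : ℕ → ℝ} {n : ℕ} {c : ℝ} : mx u n ≤ c ↔ ∀ j ≤ n, u j ≤ c := by
  induction n with
  | zero => simp [mx]
  | succ n ih =>
    simp only [mx, max_le_iff, ih]
    constructor
    · rintro ⟨h1, h2⟩ j hj
      rcases Nat.lt_or_ge n j with h | h
      · obtain rfl : j = n + 1 := by omega
        exact h2
      · exact h1 j h
    · intro h
      exact ⟨fun j hj => h j (by omega), h _ le_rfl⟩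

lemma lt_mx {u : ℕ → ℝ} {n : ℕ} {c : ℝ} : c < mx u n ↔ ∃ j ≤ n, c < u j := by
  rw [← not_le, mx_le]; push Not; rfl

lemma mx_nonneg {u : ℕ → ℝ} (hu : ∀ n, 0 ≤ u n) (n : ℕ) : 0 ≤ mx u n :=
  (hu 0).trans (mx_le.1 le_rfl 0 (Nat.zero_le _))

lemma DTree.mx_pred (T : DTree) {v : ℕ → T.Ω → E} (hv : ∀ k, T.Pred k (v k)) (n : ℕ) :
    T.Pred n (fun ω => mx (fun j => ‖T.F v j ω‖) n) := by
  induction n with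
  | zero =>
    intro j hj hN ω
    simp [mx, DTree.F_zero]
  | succ n ih =>
    intro j hj hN ω
    have := ih j (by omega) hN ω
    simp only [mx] at this ⊢
    rw [this, T.F_pred hv (n + 1) j hj hN ω]

lemma doob_step {r a b : ℝ} (hr : 1 < r) (ha : 0 ≤ a) (hb : 0 ≤ b) :
    (max a b) ^ r - a ^ r ≤ r / (r - 1) * (b * ((max a b) ^ (r - 1) - a ^ (r - 1))) := by
  rcases le_total b a with h | h
  · rw [max_eq_left h]; simp
  · rw [max_eq_right h]
    have hy := young_aux hr hb ha
    have hbr : b * b ^ (r - 1) = b ^ r := by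
      rcases hb.eq_or_lt with h0 | h0
      · rw [← h0, Real.zero_rpow (by linarith : r ≠ 0), zero_mul]
      · rw [← Real.rpow_one_add' hb (by linarith)]; congr 1; ring
    rw [mul_sub, hbr, div_mul_eq_mul_div, le_div_iff₀ (by linarith)]
    have : r * (b * a ^ (r - 1)) ≤ b ^ r + (r - 1) * a ^ r := by
      have := mul_le_mul_of_nonneg_left hy (by linarith : (0 : ℝ) ≤ r)
      refine this.trans (le_of_eq ?_)
      field_simp
    nlinarith

lemma DTree.doob (T : DTree) {v : ℕ → T.Ω → E} (hv : ∀ k, T.Pred k (v k)) {r : ℝ} (hr : 1 < r) :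
    ∑ ω, mx (fun j => ‖T.F v j ω‖) T.N ^ r ≤ (r / (r - 1)) ^ r * ∑ ω, ‖T.F v T.N ω‖ ^ r := by
  have hr1 : 0 < r - 1 := by linarith
  have hr0 : 0 < r := by linarith
  have hc : 0 < r / (r - 1) := by positivity
  have key : ∀ n ≤ T.N, ∑ ω, mx (fun j => ‖T.F v j ω‖) n ^ r ≤
      r / (r - 1) * ∑ ω, mx (fun j => ‖T.F v j ω‖) n ^ (r - 1) * ‖T.F v n ω‖ := by
    intro n
    induction n with
    | zero =>
      intro _
      simp [mx, DTree.F_zero, hr0.ne']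
    | succ n ih =>
      intro hn
      have h1 := ih (by omega)
      have h2 := T.submart hv (k := n) (by omega)
        (fun ω => mx (fun j => ‖T.F v j ω‖) n ^ (r - 1))
        (fun j hj hN ω => by
          have := T.mx_pred hv n j hj hN ω
          simp only at this ⊢
          rw [this])
        (fun ω => Real.rpow_nonneg (mx_nonneg (fun _ => norm_nonneg _) _) _)
      have h3 : ∑ ω, (mx (fun j => ‖T.F v j ω‖) (n + 1) ^ r - mx (fun j => ‖T.F v j ω‖) n ^ r) ≤
          ∑ ω, r / (r - 1) * (‖T.F v (n + 1) ω‖ * (mx (fun j => ‖T.F v j ω‖) (n + 1) ^ (r - 1)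
            - mx (fun j => ‖T.F v j ω‖) n ^ (r - 1))) :=
        Finset.sum_le_sum fun ω _ =>
          doob_step hr (mx_nonneg (fun _ => norm_nonneg _) _) (norm_nonneg _)
      rw [← Finset.mul_sum, Finset.sum_sub_distrib] at h3
      simp only [mul_sub, Finset.sum_sub_distrib] at h3
      have h4 := mul_le_mul_of_nonneg_left h2 hc.le
      simp only [mul_comm ‖_‖] at h3
      linarith
  have h1 := key T.N le_rfl
  have h2 : ∑ ω, r / (r - 1) * (mx (fun j => ‖T.F v j ω‖) T.N ^ (r - 1) * ‖T.F v T.N ω‖) ≤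
      ∑ ω, (((r / (r - 1)) ^ r * ‖T.F v T.N ω‖ ^ r) / r
        + (1 - 1 / r) * mx (fun j => ‖T.F v j ω‖) T.N ^ r) := by
    refine Finset.sum_le_sum fun ω _ => ?_
    have := young_aux hr (u := r / (r - 1) * ‖T.F v T.N ω‖) (by positivity)
      (mx_nonneg (u := fun j => ‖T.F v j ω‖) (fun _ => norm_nonneg _) T.N)
    rw [Real.mul_rpow hc.le (norm_nonneg _)] at this
    refine le_trans (le_of_eq ?_) this
    ring
  rw [Finset.sum_add_distrib, ← Finset.mul_sum, ← Finset.sum_div, ← Finset.mul_sum,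
    ← Finset.mul_sum] at h2
  have h3 := h1.trans h2
  have h4 : (∑ ω, mx (fun j => ‖T.F v j ω‖) T.N ^ r) / r ≤
    ((r / (r - 1)) ^ r * ∑ ω, ‖T.F v T.N ω‖ ^ r) / r := by
    have : (1 - 1 / r) * ∑ ω, mx (fun j => ‖T.F v j ω‖) T.N ^ r =
      ∑ ω, mx (fun j => ‖T.F v j ω‖) T.N ^ r - (∑ ω, mx (fun j => ‖T.F v j ω‖) T.N ^ r) / r := by
      ring
    linarith
  exact (div_le_div_iff_of_pos_right hr0).1 h4

/-- layer cake -/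
lemma layer {Ω : Type*} [Fintype Ω] (A B : Ω → ℝ) (hA : ∀ ω, 0 ≤ A ω) (hB : ∀ ω, 0 ≤ B ω)
    {r ε : ℝ} (hr : 0 < r) (hε : 0 ≤ ε)
    (h : ∀ l > 0, ((Finset.univ.filter fun ω => 2 * l < A ω).card : ℝ) ≤
      ε * (Finset.univ.filter fun ω => l < A ω).card
        + (Finset.univ.filter fun ω => l < B ω).card) :
    ∑ ω, (A ω / 2) ^ r ≤ ε * ∑ ω, A ω ^ r + ∑ ω, B ω ^ r := by
  let _ : MeasurableSpace Ω := ⊤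
  have key : ∀ G : Ω → ℝ, (∀ ω, 0 ≤ G ω) → ENNReal.ofReal (∑ ω, G ω ^ r) =
      ENNReal.ofReal r * ∫⁻ t in Set.Ioi (0 : ℝ),
        ENNReal.ofReal ((Finset.univ.filter fun ω => t < G ω).card : ℝ)
          * ENNReal.ofReal (t ^ (r - 1)) := by
    intro G hG
    have := lintegral_rpow_eq_lintegral_meas_lt_mul (Measure.count : Measure Ω) (f := G)
      (Filter.Eventually.of_forall hG) (measurable_of_finite G).aemeasurable hr
    rw [lintegral_count, tsum_fintype, ← ENNReal.ofReal_sum_of_nonneg] at this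
    · rw [this]
      congr 1
      refine lintegral_congr fun t => ?_
      congr 1
      have : {a : Ω | t < G a} = ↑(Finset.univ.filter fun ω => t < G ω) := by ext; simp
      rw [this, Measure.count_apply_finset, ENNReal.ofReal_natCast]
    · intro i _; exact Real.rpow_nonneg (hG i) _
  have hs : ∀ G : Ω → ℝ, (∀ ω, 0 ≤ G ω) → 0 ≤ ∑ ω, G ω ^ r := fun G hG =>
    Finset.sum_nonneg fun i _ => Real.rpow_nonneg (hG i) _
  rw [← ENNReal.ofReal_le_ofReal_iff
    (add_nonneg (mul_nonneg hε (hs A hA)) (hs B hB)),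
    ENNReal.ofReal_add (mul_nonneg hε (hs A hA)) (hs B hB), ENNReal.ofReal_mul hε,
    key (fun ω => A ω / 2) (fun ω => by have := hA ω; positivity), key A hA, key B hB,
    mul_left_comm, ← mul_add]
  gcongr
  have hm : ∀ G : Ω → ℝ, Measurable fun t : ℝ =>
      ENNReal.ofReal ((Finset.univ.filter fun ω => t < G ω).card : ℝ)
          * ENNReal.ofReal (t ^ (r - 1)) := by
    intro G
    refine Measurable.mul ?_ (ENNReal.measurable_ofReal.comp (measurable_id.pow_const (r - 1)))
    refine ENNReal.measurable_ofReal.comp ?_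
    have : (fun t : ℝ => ((Finset.univ.filter fun ω => t < G ω).card : ℝ)) =
      fun t => ∑ ω, Set.indicator (Set.Iio (G ω)) (fun _ => (1 : ℝ)) t := by
      ext t; simp [Set.indicator_apply]
    rw [this]
    exact Finset.measurable_sum _ fun ω _ => measurable_const.indicator measurableSet_Iio
  rw [← lintegral_const_mul _ (hm A), ← lintegral_add_right _ (hm B)]
  refine setLIntegral_mono' measurableSet_Ioi fun t ht => ?_
  rw [← mul_assoc, ← add_mul, ← ENNReal.ofReal_mul hε, ← ENNReal.ofReal_add (by positivity)
    (by positivity)]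
  gcongr
  refine le_trans (le_of_eq ?_) (h t ht)
  congr 2
  ext ω
  simp only [Finset.mem_filter, Finset.mem_univ, true_and]
  constructor <;> intro h <;> linarith

end PartB

section PartC

variable {E : Type*} [NormedAddCommGroup E] [NormedSpace ℝ E]

/-- `E` is UMD at exponent `q` in the tree model. -/
def UMDm (q : ℝ) (E : Type*) [NormedAddCommGroup E] [NormedSpace ℝ E] : Prop :=
  ∃ β : ℝ, 0 ≤ β ∧ ∀ (T : DTree) (v w : ℕ → T.Ω → E), (∀ k, T.Pred k (v k)) →
    (∀ k, T.Pred k (w k)) → (∀ k ω, w k ω = v k ω ∨ w k ω = - v k ω) →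
    ∑ ω, ‖T.F w T.N ω‖ ^ q ≤ β * ∑ ω, ‖T.F v T.N ω‖ ^ q

lemma interval_of {U D : ℕ → Prop} (hU : ∀ j k, j ≤ k → U j → U k)
    (hD : ∀ j k, j ≤ k → D k → D j) (n : ℕ) :
    (∀ k < n, ¬ (U k ∧ D k)) ∨ ∃ a b, a < b ∧ b ≤ n ∧ ∀ k < n, (U k ∧ D k) ↔ a ≤ k ∧ k < b := by
  induction n with
  | zero => left; intro k hk; omega
  | succ n ih =>
    by_cases hP : U n ∧ D n
    · right
      rcases ih with ih | ⟨a, b, hab, hb, ih⟩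
      · refine ⟨n, n + 1, by omega, le_rfl, fun k hk => ?_⟩
        rcases Nat.lt_or_ge k n with h | h
        · have := ih k h
          constructor
          · intro h; exact absurd h this
          · intro h; omega
        · obtain rfl : k = n := by omega
          exact ⟨fun _ => by omega, fun _ => hP⟩
      · refine ⟨a, n + 1, by omega, le_rfl, fun k hk => ?_⟩
        have ha := (ih a (by omega)).2 ⟨le_rfl, hab⟩
        constructor
        · intro h
          refine ⟨?_, hk⟩
          rcases Nat.lt_or_ge k n with h' | h'
          · exact ((ih k h').1 h).1
          · omega
        · intro h
          exact ⟨hU a k h.1 ha.1, hD k n (by omega) hP.2⟩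
    · rcases ih with ih | ⟨a, b, hab, hb, ih⟩
      · left
        intro k hk
        rcases Nat.lt_or_ge k n with h | h
        · exact ih k h
        · obtain rfl : k = n := by omega
          exact hP
      · right
        refine ⟨a, b, hab, by omega, fun k hk => ?_⟩
        rcases Nat.lt_or_ge k n with h | h
        · exact ih k h
        · obtain rfl : k = n := by omega
          exact ⟨fun h => absurd h hP, fun h => by omega⟩

lemma DTree.F_cut (T : DTree) (P : ℕ → Prop) (v v' : ℕ → T.Ω → E) (ω : T.Ω) {n a b : ℕ}
    (h1 : ∀ k, P k → v' k ω = v k ω) (h0 : ∀ k, ¬ P k → v' k ω = 0)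
    (hab : a < b) (hb : b ≤ n) (h : ∀ k < n, P k ↔ a ≤ k ∧ k < b) :
    T.F v' n ω = T.F v b ω - T.F v a ω := by
  unfold DTree.F
  rw [← Finset.sum_Ico_eq_sub _ hab.le]
  have hsub : Finset.Ico a b ⊆ Finset.range n := by
    intro k hk
    rw [Finset.mem_Ico] at hk
    rw [Finset.mem_range]
    omega
  rw [← Finset.sum_subset hsub]
  · refine Finset.sum_congr rfl fun k hk => ?_
    rw [Finset.mem_Ico] at hk
    rw [h1 k ((h k (by omega)).2 hk)]
  · intro k hk hk2
    rw [Finset.mem_Ico] at hk2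
    rw [Finset.mem_range] at hk
    rw [h0 k (fun hc => hk2 ((h k hk).1 hc)), smul_zero]

lemma DTree.F_cut0 (T : DTree) (P : ℕ → Prop) (v' : ℕ → T.Ω → E) (ω : T.Ω) {n : ℕ}
    (h0 : ∀ k, ¬ P k → v' k ω = 0) (h : ∀ k < n, ¬ P k) :
    T.F v' n ω = 0 := by
  unfold DTree.F
  refine Finset.sum_eq_zero fun k hk => ?_
  rw [h0 k (h k (Finset.mem_range.1 hk)), smul_zero]

lemma good_lambda {q β : ℝ} (hq : 0 < q) (T : DTree) (v w : ℕ → T.Ω → E)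
    (hH : ∀ (v w : ℕ → T.Ω → E), (∀ k, T.Pred k (v k)) →
      (∀ k, T.Pred k (w k)) → (∀ k ω, w k ω = v k ω ∨ w k ω = - v k ω) →
      ∑ ω, ‖T.F w T.N ω‖ ^ q ≤ β * ∑ ω, ‖T.F v T.N ω‖ ^ q)
    (hβ : 0 ≤ β)
    (hv : ∀ k, T.Pred k (v k)) (hw : ∀ k, T.Pred k (w k))
    (hvw : ∀ k ω, w k ω = v k ω ∨ w k ω = - v k ω)
    {δ l : ℝ} (hδ : 0 < δ) (hδ4 : δ ≤ 1 / 4) (hl : 0 < l) :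
    ((Finset.univ.filter fun ω => 2 * l < mx (fun j => ‖T.F w j ω‖) T.N).card : ℝ) ≤
      β * (8 * δ) ^ q * (Finset.univ.filter fun ω => l < mx (fun j => ‖T.F w j ω‖) T.N).card
        + (Finset.univ.filter fun ω => l < mx (fun j => ‖T.F v j ω‖) T.N / δ).card := by
  have hdl : 0 < δ * l := by positivity
  have hnvw : ∀ k ω, ‖w k ω‖ = ‖v k ω‖ := by
    intro k ω
    rcases hvw k ω with h | h <;> simp [h]
  set U : ℕ → T.Ω → Prop := fun k ω => ∃ j ≤ k, l < ‖T.F w j ω‖ with hUdef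
  set D : ℕ → T.Ω → Prop := fun k ω => ∀ j ≤ k, ‖T.F w j ω‖ ≤ 2 * l ∧ ‖T.F v j ω‖ ≤ δ * l ∧
    ‖v j ω‖ ≤ 2 * (δ * l) with hDdef
  have hU : ∀ ω j k, j ≤ k → U j ω → U k ω := fun ω j k hjk ⟨i, hi, h⟩ => ⟨i, hi.trans hjk, h⟩
  have hD : ∀ ω j k, j ≤ k → D k ω → D j ω := fun ω j k hjk h i hi => h i (hi.trans hjk)
  have hPpred : ∀ k, T.Pred k (fun ω => U k ω ∧ D k ω) := by
    intro k j hj hN ω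
    have e1 : ∀ i ≤ k, T.F w i (T.fl j ω) = T.F w i ω := fun i hi =>
      T.F_pred hw i j (hi.trans hj) hN ω
    have e2 : ∀ i ≤ k, T.F v i (T.fl j ω) = T.F v i ω := fun i hi =>
      T.F_pred hv i j (hi.trans hj) hN ω
    have e3 : ∀ i ≤ k, v i (T.fl j ω) = v i ω := fun i hi =>
      hv i j (hi.trans hj) hN ω
    simp only [hUdef, hDdef, eq_iff_iff]
    refine and_congr (exists_congr fun i => and_congr_right fun hi => by rw [e1 i hi])
      (forall_congr' fun i => forall_congr' fun hi => by rw [e1 i hi, e2 i hi, e3 i hi])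
  set v' : ℕ → T.Ω → E := fun k ω => if U k ω ∧ D k ω then v k ω else 0 with hv'
  set w' : ℕ → T.Ω → E := fun k ω => if U k ω ∧ D k ω then w k ω else 0 with hw'
  have hpv' : ∀ k, T.Pred k (v' k) := by
    intro k j hj hN ω
    have h1 : (U k (T.fl j ω) ∧ D k (T.fl j ω)) = (U k ω ∧ D k ω) := hPpred k j hj hN ω
    simp only [hv', h1, hv k j hj hN ω]
  have hpw' : ∀ k, T.Pred k (w' k) := by
    intro k j hj hN ω
    have h1 : (U k (T.fl j ω) ∧ D k (T.fl j ω)) = (U k ω ∧ D k ω) := hPpred k j hj hN ω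
    simp only [hw', h1, hw k j hj hN ω]
  have hmain := hH v' w' hpv' hpw' (by
    intro k ω
    simp only [hv', hw']
    split_ifs
    · exact hvw k ω
    · simp)
  -- upper bound
  have hup : ∑ ω, ‖T.F v' T.N ω‖ ^ q ≤
      (Finset.univ.filter fun ω => l < mx (fun j => ‖T.F w j ω‖) T.N).card * (4 * (δ * l)) ^ q := by
    rw [← nsmul_eq_mul, ← Finset.sum_const, Finset.sum_filter]
    refine Finset.sum_le_sum fun ω _ => ?_
    have hnn : 0 ≤ if l < mx (fun j => ‖T.F w j ω‖) T.N then (4 * (δ * l)) ^ q else 0 := by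
      split_ifs <;> positivity
    rcases interval_of (hU ω) (hD ω) T.N with h | ⟨a, b, hab, hb, h⟩
    · rw [T.F_cut0 _ v' ω (fun k hk => if_neg hk) h, norm_zero, Real.zero_rpow hq.ne']
      exact hnn
    · rw [T.F_cut _ v v' ω (fun k hk => if_pos hk) (fun k hk => if_neg hk) hab hb h]
      obtain ⟨⟨i, hi, hi'⟩, hDa⟩ := (h a (by omega)).2 ⟨le_rfl, hab⟩
      rw [if_pos (lt_mx.2 ⟨i, by omega, hi'⟩)]
      obtain ⟨b, rfl⟩ : ∃ c, b = c + 1 := ⟨b - 1, by omega⟩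
      obtain ⟨_, hDb⟩ := (h b (by omega)).2 ⟨by omega, by omega⟩
      refine Real.rpow_le_rpow (norm_nonneg _) ?_ hq.le
      rw [T.F_succ]
      have h1 := norm_sub_le (T.F v b ω + T.s b ω • v b ω) (T.F v a ω)
      have h2 := norm_add_le (T.F v b ω) (T.s b ω • v b ω)
      rw [T.norm_s] at h2
      have h3 := (hDa a le_rfl).2.1
      have h4 := (hDb b le_rfl).2
      linarith [h4.1, h4.2]
  -- lower bound
  have hlow : (Finset.univ.filter fun ω => 2 * l < mx (fun j => ‖T.F w j ω‖) T.N ∧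
      mx (fun j => ‖T.F v j ω‖) T.N ≤ δ * l).card * (l / 2) ^ q ≤ ∑ ω, ‖T.F w' T.N ω‖ ^ q := by
    rw [← nsmul_eq_mul, ← Finset.sum_const, Finset.sum_filter]
    refine Finset.sum_le_sum fun ω _ => ?_
    split_ifs with hω
    swap
    · positivity
    obtain ⟨hA, hB⟩ := hω
    rw [mx_le] at hB
    have hvb : ∀ j < T.N, ‖v j ω‖ ≤ 2 * (δ * l) := by
      intro j hj
      have e : T.s j ω • v j ω = T.F v (j + 1) ω - T.F v j ω := by rw [T.F_succ]; abel
      rw [← T.norm_s j ω, e]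
      have := norm_sub_le (T.F v (j + 1) ω) (T.F v j ω)
      linarith [hB (j + 1) (by omega), hB j (by omega)]
    have hstep : ∀ j < T.N, ‖T.F w (j + 1) ω‖ ≤ ‖T.F w j ω‖ + 2 * (δ * l) := by
      intro j hj
      rw [T.F_succ]
      have := norm_add_le (T.F w j ω) (T.s j ω • w j ω)
      rw [T.norm_s, hnvw] at this
      linarith [hvb j hj]
    have hdl2 : 2 * (δ * l) ≤ l / 2 := by nlinarith
    have hex : ∃ t, t ≤ T.N ∧ 2 * l < ‖T.F w t ω‖ := by
      obtain ⟨t, h1, h2⟩ := lt_mx.1 hA; exact ⟨t, h1, h2⟩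
    obtain ⟨hTN, hT2⟩ := Nat.find_spec hex
    have hTmin : ∀ j < Nat.find hex, ‖T.F w j ω‖ ≤ 2 * l := by
      intro j hj
      by_contra hc
      push Not at hc
      exact Nat.find_min hex hj ⟨by omega, hc⟩
    generalize Nat.find hex = t2 at *
    have ht0 : t2 ≠ 0 := by
      rintro rfl
      rw [T.F_zero, norm_zero] at hT2
      linarith
    obtain ⟨c, rfl⟩ : ∃ c, t2 = c + 1 := ⟨t2 - 1, by omega⟩
    have hPc : U c ω ∧ D c ω := by
      refine ⟨⟨c, le_rfl, ?_⟩, fun j hj => ⟨hTmin j (by omega), hB j (by omega), hvb j (by omega)⟩⟩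
      linarith [hstep c (by omega)]
    have hPn : ¬ D (c + 1) ω := by
      intro h
      linarith [(h (c + 1) le_rfl).1]
    rcases interval_of (hU ω) (hD ω) T.N with h | ⟨a, b, hab, hb, h⟩
    · exact absurd hPc (h c (by omega))
    · rw [T.F_cut _ w w' ω (fun k hk => if_pos hk) (fun k hk => if_neg hk) hab hb h]
      have h1 := (h c (by omega)).1 hPc
      have hbc : b = c + 1 := by
        by_contra hne
        exact hPn ((h (c + 1) (by omega)).2 ⟨by omega, by omega⟩).2
      subst hbc
      obtain ⟨⟨i, hi, hi'⟩, hDa⟩ := (h a (by omega)).2 ⟨le_rfl, hab⟩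
      have ha0 : a ≠ 0 := by
        rintro rfl
        obtain rfl : i = 0 := by omega
        rw [T.F_zero, norm_zero] at hi'
        linarith
      obtain ⟨a, rfl⟩ : ∃ c, a = c + 1 := ⟨a - 1, by omega⟩
      have hnP : ¬ U a ω := by
        intro hUa
        have := (h a (by omega)).1 ⟨hUa, hD ω _ _ (Nat.le_succ a) hDa⟩
        omega
      have hga : ‖T.F w a ω‖ ≤ l := by
        by_contra hc
        push Not at hc
        exact hnP ⟨a, le_rfl, hc⟩
      refine Real.rpow_le_rpow (by positivity) ?_ hq.le
      have h2 := norm_sub_norm_le (T.F w (c + 1) ω) (T.F w (a + 1) ω)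
      linarith [hstep a (by omega)]
  have hcard : ((Finset.univ.filter fun ω => 2 * l < mx (fun j => ‖T.F w j ω‖) T.N).card : ℝ) ≤
      (Finset.univ.filter fun ω => 2 * l < mx (fun j => ‖T.F w j ω‖) T.N ∧
      mx (fun j => ‖T.F v j ω‖) T.N ≤ δ * l).card +
      (Finset.univ.filter fun ω => l < mx (fun j => ‖T.F v j ω‖) T.N / δ).card := by
    norm_cast
    refine le_trans (Finset.card_le_card ?_) (Finset.card_union_le _ _)
    intro ω hω
    simp only [Finset.mem_union, Finset.mem_filter, Finset.mem_univ, true_and] at hω ⊢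
    rcases le_or_gt (mx (fun j => ‖T.F v j ω‖) T.N) (δ * l) with h | h
    · exact Or.inl ⟨hω, h⟩
    · right
      rw [lt_div_iff₀ hδ]; linarith
  refine hcard.trans (add_le_add ?_ le_rfl)
  have h1 := hlow.trans (hmain.trans (mul_le_mul_of_nonneg_left hup hβ))
  have h2 : (4 * (δ * l)) ^ q = (8 * δ) ^ q * (l / 2) ^ q := by
    rw [← Real.mul_rpow (by positivity) (by positivity)]; congr 1; ring
  rw [h2] at h1
  have h3 : 0 < (l / 2) ^ q := by positivity
  refine le_of_mul_le_mul_right (h1.trans (le_of_eq ?_)) h3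
  ring

lemma UMDm_extrap {q r : ℝ} (hq : 0 < q) (hr : 1 < r) (h : UMDm q E) : UMDm r E := by
  obtain ⟨β, hβ, hH⟩ := h
  have hr0 : 0 < r := by linarith
  -- choose δ
  obtain ⟨δ, hδ, hδ4, hδε⟩ : ∃ δ : ℝ, 0 < δ ∧ δ ≤ 1 / 4 ∧ β * (8 * δ) ^ q ≤ (1 / 2) ^ r / 2 := by
    have hc : Filter.Tendsto (fun δ : ℝ => β * (8 * δ) ^ q) (nhdsWithin 0 (Set.Ioi 0))
        (nhds 0) := by
      have : ContinuousAt (fun δ : ℝ => β * (8 * δ) ^ q) 0 := by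
        refine ContinuousAt.mul continuousAt_const ?_
        exact ContinuousAt.rpow_const (by fun_prop) (Or.inr hq.le)
      have h2 := this.tendsto
      simp only [mul_zero, Real.zero_rpow hq.ne'] at h2
      exact h2.mono_left nhdsWithin_le_nhds
    have h1 := hc.eventually (eventually_le_nhds (show (0 : ℝ) < (1 / 2) ^ r / 2 by positivity))
    have h2 : ∀ᶠ δ : ℝ in nhdsWithin 0 (Set.Ioi 0), δ ≤ 1 / 4 :=
      nhdsWithin_le_nhds (eventually_le_nhds (by norm_num))
    have h3 : ∀ᶠ δ : ℝ in nhdsWithin 0 (Set.Ioi 0), 0 < δ := self_mem_nhdsWithin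
    obtain ⟨δ, h⟩ := (h1.and (h2.and h3)).exists
    exact ⟨δ, h.2.2, h.2.1, h.1⟩
  refine ⟨2 * 2 ^ r * ((1 / δ) ^ r * (r / (r - 1)) ^ r), ?_, ?_⟩
  · have : 0 < r - 1 := by linarith
    positivity
  intro T v w hv hw hvw
  have hmn : ∀ (u : ℕ → T.Ω → E) ω, 0 ≤ mx (fun j => ‖T.F u j ω‖) T.N :=
    fun u ω => mx_nonneg (fun _ => norm_nonneg _) _
  have h1 := layer (fun ω => mx (fun j => ‖T.F w j ω‖) T.N)
    (fun ω => mx (fun j => ‖T.F v j ω‖) T.N / δ) (hmn w) (fun ω => div_nonneg (hmn v ω) hδ.le)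
    hr0 (ε := β * (8 * δ) ^ q) (by positivity)
    (fun l hl => good_lambda hq T v w (hH T) hβ hv hw hvw hδ hδ4 hl)
  have h2 := T.doob hv hr
  have e1 : ∀ ω, (mx (fun j => ‖T.F w j ω‖) T.N / 2) ^ r =
      (1 / 2) ^ r * mx (fun j => ‖T.F w j ω‖) T.N ^ r := by
    intro ω
    rw [← Real.mul_rpow (by norm_num) (hmn w ω)]; congr 1; ring
  have e2 : ∀ ω, (mx (fun j => ‖T.F v j ω‖) T.N / δ) ^ r =
      (1 / δ) ^ r * mx (fun j => ‖T.F v j ω‖) T.N ^ r := by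
    intro ω
    rw [← Real.mul_rpow (by positivity) (hmn v ω)]; congr 1; ring
  simp only [e1, e2, ← Finset.mul_sum] at h1
  set Y := ∑ ω, mx (fun j => ‖T.F w j ω‖) T.N ^ r with hY
  have hY0 : 0 ≤ Y := Finset.sum_nonneg fun ω _ => Real.rpow_nonneg (hmn w ω) _
  have h3 := mul_le_mul_of_nonneg_right hδε hY0
  have h4 := mul_le_mul_of_nonneg_left h2 (by positivity : 0 ≤ (1 / δ) ^ r)
  have h5 : ∑ ω, ‖T.F w T.N ω‖ ^ r ≤ Y := Finset.sum_le_sum fun ω _ =>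
    Real.rpow_le_rpow (norm_nonneg _)
      (mx_le (u := fun j => ‖T.F w j ω‖).1 le_rfl T.N le_rfl) hr0.le
  have h6 : (1 / 2) ^ r * Y ≤ 2 * ((1 / δ) ^ r * ((r / (r - 1)) ^ r * ∑ ω, ‖T.F v T.N ω‖ ^ r)) := by
    linarith
  have h7 : (2 : ℝ) ^ r * (1 / 2) ^ r = 1 := by
    rw [← Real.mul_rpow (by norm_num) (by norm_num)]; norm_num
  have h8 := mul_le_mul_of_nonneg_left h6 (by positivity : (0 : ℝ) ≤ 2 ^ r)
  rw [← mul_assoc, h7, one_mul] at h8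
  refine h5.trans (h8.trans (le_of_eq ?_))
  ring

lemma UMDm_real_two : UMDm 2 ℝ := by
  refine ⟨1, zero_le_one, ?_⟩
  intro T v w hv hw hvw
  have key : ∀ u : ℕ → T.Ω → ℝ, (∀ k, T.Pred k (u k)) → ∀ n ≤ T.N,
      ∑ ω, (T.F u n ω) ^ 2 = ∑ ω, ∑ k ∈ Finset.range n, (u k ω) ^ 2 := by
    intro u hu n
    induction n with
    | zero => intro _; simp [DTree.F_zero]
    | succ n ih =>
      intro hn
      have h0 : ∑ ω, T.F u n ω * (T.s n ω * u n ω) = 0 := by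
        have h1 := T.sum_fl n (fun ω => T.F u n ω * (T.s n ω * u n ω))
        have h2 : ∑ ω, T.F u n (T.fl n ω) * (T.s n (T.fl n ω) * u n (T.fl n ω)) =
          - ∑ ω, T.F u n ω * (T.s n ω * u n ω) := by
          rw [← Finset.sum_neg_distrib]
          refine Finset.sum_congr rfl fun ω _ => ?_
          rw [T.F_pred hu n n le_rfl (by omega), T.s_fl n ω (by omega), hu n n le_rfl (by omega)]
          ring
        linarith
      simp only [Finset.sum_range_succ, Finset.sum_add_distrib] at ih ⊢
      rw [← ih (by omega)]
      have : ∀ ω, (T.F u (n + 1) ω) ^ 2 = (T.F u n ω) ^ 2 + (u n ω) ^ 2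
          + 2 * (T.F u n ω * (T.s n ω * u n ω)) := by
        intro ω
        rw [T.F_succ, smul_eq_mul]
        have : (T.s n ω) ^ 2 = 1 := by rcases T.s_sq n ω with h | h <;> simp [h]
        linear_combination (u n ω) ^ 2 * this
      simp only [this, Finset.sum_add_distrib, ← Finset.mul_sum, h0]
      ring
  have e : ∀ x : ℝ, ‖x‖ ^ (2 : ℝ) = x ^ 2 := by
    intro x; rw [Real.rpow_two]; simp
  simp only [e, one_mul]
  rw [key w hw T.N le_rfl, key v hv T.N le_rfl]
  refine le_of_eq (Finset.sum_congr rfl fun ω _ => Finset.sum_congr rfl fun k _ => ?_)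
  rcases hvw k ω with h | h <;> simp [h]

lemma UMDm_lp {ι : Type} {q : ℝ} (hq : 1 < q) [Fact (1 ≤ ENNReal.ofReal q)] {r : ℝ} (hr : 1 < r) :
    UMDm r (lp (fun _ : ι => ℝ) (ENNReal.ofReal q)) := by
  have hq0 : 0 < q := by linarith
  refine UMDm_extrap hq0 hr ?_
  obtain ⟨β, hβ, hH⟩ := UMDm_extrap (q := 2) (r := q) (by norm_num) hq UMDm_real_two
  refine ⟨β, hβ, ?_⟩
  intro T v w hv hw hvw
  have hqt : (ENNReal.ofReal q).toReal = q := ENNReal.toReal_ofReal hq0.le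
  have hF : ∀ (u : ℕ → T.Ω → lp (fun _ : ι => ℝ) (ENNReal.ofReal q)) ω i,
      T.F u T.N ω i = T.F (fun k ω => u k ω i) T.N ω := by
    intro u ω i
    unfold DTree.F
    rw [lp.coeFn_sum, Finset.sum_apply]
    rfl
  have hnorm : ∀ x : lp (fun _ : ι => ℝ) (ENNReal.ofReal q),
      HasSum (fun i => ‖x i‖ ^ q) (‖x‖ ^ q) := by
    intro x
    have := lp.hasSum_norm (p := ENNReal.ofReal q) (by rw [hqt]; exact hq0) x
    rwa [hqt] at this
  have hs : ∀ u : ℕ → T.Ω → lp (fun _ : ι => ℝ) (ENNReal.ofReal q),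
      HasSum (fun i => ∑ ω, ‖T.F (fun k ω => u k ω i) T.N ω‖ ^ q) (∑ ω, ‖T.F u T.N ω‖ ^ q) := by
    intro u
    refine hasSum_sum fun ω _ => ?_
    have := hnorm (T.F u T.N ω)
    simp only [hF] at this
    exact this
  refine hasSum_le ?_ (hs w) ((hs v).mul_left β)
  intro i
  refine hH T _ _ ?_ ?_ ?_
  · intro k j hj hN ω
    simp only [hv k j hj hN ω]
  · intro k j hj hN ω
    simp only [hw k j hj hN ω]
  · intro k ω
    rcases hvw k ω with h | h
    · left; simp [h]
    · right; simp [h]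

end PartC

section PartD

/-! ### From the tree model to Haar expansions -/

/-- the concrete tree of depth `N` -/
def stdTree (N : ℕ) : DTree where
  N := N
  Ω := Fin (2 ^ N)
  fin := inferInstance
  s k ω := if ω.val.testBit (N - 1 - k) then -1 else 1
  fl k ω := if h : k < N then ⟨ω.val ^^^ 2 ^ (N - 1 - k),
    Nat.xor_lt_two_pow ω.2 (Nat.pow_lt_pow_right (by norm_num) (by omega))⟩ else ω
  fl_inv k ω := by
    by_cases h : k < N
    · simp [h]
    · simp [h]
  s_sq k ω := by split_ifs <;> simp
  s_fl k ω h := by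
    simp only [h, dif_pos, Nat.testBit_xor, Nat.testBit_two_pow_self]
    cases ω.val.testBit (N - 1 - k) <;> simp
  s_fl' k j ω hkj hj := by
    simp only [hj, dif_pos, Nat.testBit_xor]
    rw [Nat.testBit_two_pow_of_ne (by omega)]
    simp

lemma stdTree_div (N j k : ℕ) (hk : k ≤ j) (hj : j < N) (ω : Fin (2 ^ N)) :
    ((stdTree N).fl j ω : Fin (2 ^ N)).val / 2 ^ (N - k) = ω.val / 2 ^ (N - k) := by
  have : ((stdTree N).fl j ω : Fin (2 ^ N)).val = ω.val ^^^ 2 ^ (N - 1 - j) := by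
    simp [stdTree, hj]
  rw [this, ← Nat.shiftRight_eq_div_pow, ← Nat.shiftRight_eq_div_pow, Nat.shiftRight_xor_distrib]
  have : 2 ^ (N - 1 - j) >>> (N - k) = 0 := by
    rw [Nat.shiftRight_eq_div_pow]
    exact Nat.div_eq_of_lt (Nat.pow_lt_pow_right (by norm_num) (by omega))
  rw [this, Nat.xor_zero]

variable {E : Type*} [NormedAddCommGroup E] [NormedSpace ℝ E]

/-- the predictable process attached to a Haar expansion -/
def proc (N : ℕ) (s : Finset DyadicI) (x : DyadicI → E) (k : ℕ) (ω : Fin (2 ^ N)) : E :=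
  ∑ I ∈ s, if I.n = k ∧ I.k = ω.val / 2 ^ (N - k) then x I else 0

lemma proc_pred (N : ℕ) (s : Finset DyadicI) (x : DyadicI → E) (k : ℕ) :
    (stdTree N).Pred k (proc N s x k) := by
  intro j hj hN ω
  unfold proc
  rw [stdTree_div N j k hj hN ω]

lemma haar_gp {N : ℕ} {I : DyadicI} (h : I.n < N) (ω : Fin (2 ^ N)) :
    haar I (gp N ω.val) = if I.k = ω.val / 2 ^ (N - I.n) then (stdTree N).s I.n ω else 0 := by
  rw [haar_eq I (gp_nonneg _ _), floor_level (Nat.succ_le_of_lt h), floor_gp]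
  have e1 : ω.val / 2 ^ (N - I.n) = ω.val / 2 ^ (N - (I.n + 1)) / 2 := by
    rw [Nat.div_div_eq_div_mul, ← pow_succ]; congr 2; omega
  have e2 : (stdTree N).s I.n ω = if ω.val / 2 ^ (N - (I.n + 1)) % 2 = 1 then -1 else 1 := by
    have e3 : N - 1 - I.n = N - (I.n + 1) := by omega
    simp only [stdTree, Nat.testBit_eq_decide_div_mod_eq, e3, decide_eq_true_eq]
  rw [e1, e2]
  simp only [Nat.succ_eq_add_one]
  generalize ω.val / 2 ^ (N - (I.n + 1)) = c
  split_ifs <;> first | rfl | (exfalso; omega)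

lemma proc_F (N : ℕ) (s : Finset DyadicI) (hs : ∀ I ∈ s, I.n < N) (x : DyadicI → E)
    (ω : Fin (2 ^ N)) :
    (stdTree N).F (proc N s x) N ω = ∑ I ∈ s, haar I (gp N ω.val) • x I := by
  unfold DTree.F proc
  simp only [Finset.smul_sum]
  rw [Finset.sum_comm]
  refine Finset.sum_congr rfl fun I hI => ?_
  rw [Finset.sum_eq_single I.n]
  · rw [haar_gp (hs I hI)]
    split_ifs with h1 h2 h2
    · rfl
    · exact absurd h1.2 h2
    · exact absurd ⟨rfl, h2⟩ h1
    · simp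
  · intro k _ hk
    rw [if_neg (fun h => hk h.1.symm), smul_zero]
  · intro h
    exact absurd (Finset.mem_range.2 (hs I hI)) h

lemma integral_proc (N : ℕ) (s : Finset DyadicI) (hs : ∀ I ∈ s, I.n < N) (x : DyadicI → E) (r : ℝ) :
    ∫ t in Set.Icc (0 : ℝ) 1, ‖∑ I ∈ s, haar I t • x I‖ ^ r =
      (∑ ω, ‖(stdTree N).F (proc N s x) (stdTree N).N ω‖ ^ r) / 2 ^ N := by
  have hstep : Step N (fun t => ‖∑ I ∈ s, haar I t • x I‖ ^ r) := by
    intro t t' ht ht' e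
    have : ∀ I ∈ s, haar I t • x I = haar I t' • x I := fun I hI => by
      rw [step_haar (hs I hI) t t' ht ht' e]
    simp only [Finset.sum_congr rfl this]
  rw [integral_step hstep, av, Finset.sum_range]
  congr 1
  refine Finset.sum_congr rfl fun ω _ => ?_
  rw [← proc_F N s hs x ω]
  rfl

lemma exists_level (s : Finset DyadicI) : ∃ N : ℕ, ∀ I ∈ s, I.n < N := by
  refine ⟨s.sup (fun I => I.n) + 1, fun I hI => ?_⟩
  have := Finset.le_sup (f := fun I : DyadicI => I.n) hI
  omega

lemma isUMD_of_model (h : ∀ r : ℝ, 1 < r → UMDm r E) : IsUMD E := by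
  intro r hr
  obtain ⟨β, hβ, hH⟩ := h r hr
  refine ⟨β ^ (1 / r), ?_⟩
  intro s x ε hε
  obtain ⟨N, hN⟩ := exists_level s
  have hr0 : 0 < 1 / r := by positivity
  unfold LpNormV
  rw [integral_proc N s hN x r, integral_proc N s hN (fun I => ε I • x I) r]
  rw [← Real.mul_rpow hβ (by positivity)]
  refine Real.rpow_le_rpow (by positivity) ?_ hr0.le
  rw [← mul_div_assoc]
  refine div_le_div_of_nonneg_right ?_ (by positivity)
  refine hH (stdTree N) _ _ (proc_pred N s _) (proc_pred N s _) ?_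
  intro k ω
  by_cases hex : ∃ I ∈ s, I.n = k ∧ I.k = ω.val / 2 ^ (N - k)
  · obtain ⟨I, hI, hI2⟩ := hex
    have hone : ∀ y : DyadicI → E, proc N s y k ω = y I := by
      intro y
      unfold proc
      rw [Finset.sum_eq_single I]
      · rw [if_pos hI2]
      · intro J _ hJ
        rw [if_neg]
        rintro ⟨h1, h2⟩
        apply hJ
        cases I; cases J
        simp only at hI2 h1 h2
        simp only [DyadicI.mk.injEq]
        exact ⟨h1.trans hI2.1.symm, h2.trans hI2.2.symm⟩
      · intro h; exact absurd hI h
    rw [hone, hone]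
    rcases hε I with h | h
    · left; simp [h]
    · right; simp [h]
  · left
    have hzero : ∀ y : DyadicI → E, proc N s y k ω = 0 := by
      intro y
      unfold proc
      refine Finset.sum_eq_zero fun J hJ => ?_
      rw [if_neg]
      intro h
      exact hex ⟨J, hJ, h⟩
    rw [hzero, hzero]

lemma isUMD_lp {q : ℝ} (hq : 1 < q) [Fact (1 ≤ ENNReal.ofReal q)] :
    IsUMD (lp (fun _ : DyadicI => ℝ) (ENNReal.ofReal q)) :=
  isUMD_of_model fun _ hr => UMDm_lp hq hr

end PartD

section PartG

/-! ### Extracting a scalar inequality from the hypothesis -/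

section opb
variable {E : Type*} [NormedAddCommGroup E] [NormedSpace ℝ E]

lemma LpNormV_smul {p : ℝ} (hp : 0 < p) (s : Finset DyadicI) (x : DyadicI → E) {c : ℝ} (hc : 0 ≤ c) :
    LpNormV p s (fun I => c • x I) = c * LpNormV p s x := by
  unfold LpNormV
  have : ∀ t, ‖∑ I ∈ s, haar I t • c • x I‖ ^ p = c ^ p * ‖∑ I ∈ s, haar I t • x I‖ ^ p := by
    intro t
    simp_rw [smul_comm _ c]
    rw [← Finset.smul_sum, norm_smul, Real.norm_of_nonneg hc, Real.mul_rpow hc (norm_nonneg _)]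
  simp_rw [this]
  rw [integral_const_mul, Real.mul_rpow (by positivity)
    (integral_nonneg fun t => Real.rpow_nonneg (norm_nonneg _) _), ← Real.rpow_mul hc,
    mul_one_div_cancel hp.ne', Real.rpow_one]

lemma LpNormV_nonneg (p : ℝ) (s : Finset DyadicI) (x : DyadicI → E) : 0 ≤ LpNormV p s x := by
  unfold LpNormV
  exact Real.rpow_nonneg (integral_nonneg fun t => Real.rpow_nonneg (norm_nonneg _) _) _

lemma rearrCoef_smul (τ : DyadicI → DyadicI) (p : ℝ) (s : Finset DyadicI) (x : DyadicI → E) (c : ℝ) :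
    rearrCoef τ p s (fun I => c • x I) = fun J => c • rearrCoef τ p s x J := by
  ext J
  unfold rearrCoef
  rw [Finset.smul_sum]
  refine Finset.sum_congr rfl fun I _ => ?_
  split_ifs
  · rw [smul_comm]
  · simp

lemma op_bound {τ : DyadicI → DyadicI} {p : ℝ} (hp : 0 < p) (h : lpOpNorm τ p E < ⊤) :
    ∃ C : ℝ, 0 ≤ C ∧ ∀ (s : Finset DyadicI) (x : DyadicI → E),
      LpNormV p (s.image τ) (rearrCoef τ p s x) ≤ C * LpNormV p s x := by
  refine ⟨(lpOpNorm τ p E).toReal, ENNReal.toReal_nonneg, ?_⟩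
  intro s x
  set C := (lpOpNorm τ p E).toReal with hC
  have key : ∀ y : DyadicI → E, LpNormV p s y ≤ 1 →
      LpNormV p (s.image τ) (rearrCoef τ p s y) ≤ C := by
    intro y hy
    have h1 : ENNReal.ofReal (LpNormV p (s.image τ) (rearrCoef τ p s y)) ≤ lpOpNorm τ p E := by
      unfold lpOpNorm
      exact le_iSup_of_le s (le_iSup_of_le y (le_iSup_of_le hy le_rfl))
    exact (ENNReal.ofReal_le_iff_le_toReal h.ne).1 h1
  have h2 : ∀ M > LpNormV p s x, LpNormV p (s.image τ) (rearrCoef τ p s x) ≤ C * M := by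
    intro M hM
    have hM0 : 0 < M := (LpNormV_nonneg p s x).trans_lt hM
    have h3 := key (fun I => M⁻¹ • x I) (by
      rw [LpNormV_smul hp s x (by positivity), inv_mul_le_iff₀ hM0]; linarith)
    rw [rearrCoef_smul, LpNormV_smul hp _ _ (by positivity), inv_mul_le_iff₀ hM0] at h3
    linarith
  have h4 : Filter.Tendsto (fun M : ℝ => C * M) (nhdsWithin (LpNormV p s x) (Set.Ioi (LpNormV p s x)))
      (nhds (C * LpNormV p s x)) :=
    ((continuous_const.mul continuous_id).tendsto _).mono_left nhdsWithin_le_nhds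
  refine ge_of_tendsto h4 ?_
  filter_upwards [self_mem_nhdsWithin] with M hM using h2 M hM

end opb

lemma sum_image_pick {X : Type*} [AddCommMonoid X] {τ : DyadicI → DyadicI}
    (hτ : Function.Injective τ) (L : Finset DyadicI) (a : DyadicI → X) {I : DyadicI} (hI : I ∈ L) :
    (∑ K ∈ L, if τ K = τ I then a K else 0) = a I := by
  rw [Finset.sum_eq_single I]
  · simp
  · intro K _ hK
    rw [if_neg (fun h => hK (hτ h))]
  · intro h; exact absurd hI h

lemma norm_lp_sum {q : ℝ} (hq : 0 < q) [Fact (1 ≤ ENNReal.ofReal q)] (L : Finset DyadicI)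
    (z : DyadicI → ℝ) {p : ℝ} :
    ‖∑ I ∈ L, lp.single (E := fun _ : DyadicI => ℝ) (ENNReal.ofReal q) I (z I)‖ ^ p =
      (∑ I ∈ L, |z I| ^ q) ^ (p / q) := by
  have hqt : (ENNReal.ofReal q).toReal = q := ENNReal.toReal_ofReal hq.le
  have := lp.norm_sum_single (E := fun _ : DyadicI => ℝ) (p := ENNReal.ofReal q)
    (by rw [hqt]; exact hq) z L
  rw [hqt] at this
  simp only [Real.norm_eq_abs] at this
  rw [← this, ← Real.rpow_mul (norm_nonneg _), mul_div_cancel₀ _ hq.ne']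

lemma abs_rpow_haar {q c : ℝ} (hq : 0 < q) (hc : 0 ≤ c) (I : DyadicI) (t : ℝ) :
    |haar I t * c ^ (1 / q)| ^ q = c * ind I t := by
  rw [abs_mul, abs_haar, abs_of_nonneg (Real.rpow_nonneg hc _),
    Real.mul_rpow (ind_nonneg _ _) (Real.rpow_nonneg hc _), ← Real.rpow_mul hc,
    one_div_mul_cancel hq.ne', Real.rpow_one, mul_comm]
  congr 1
  rw [ind_eq]
  split_ifs
  · simp
  · rw [Real.zero_rpow hq.ne']

lemma scalar_bound {p q : ℝ} (hq : 1 < q) (hqp : q < p) [Fact (1 ≤ ENNReal.ofReal q)]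
    {τ : DyadicI → DyadicI} (hτ : Function.Injective τ)
    (h : lpOpNorm τ p (lp (fun _ : DyadicI => ℝ) (ENNReal.ofReal q)) < ⊤) :
    ∃ C : ℝ, 0 ≤ C ∧ ∀ (L : Finset DyadicI) (c : DyadicI → ℝ), (∀ I, 0 ≤ c I) →
      ∫ t in Set.Icc (0 : ℝ) 1, (∑ I ∈ L, ((len I / len (τ I)) ^ (1 / (p / q)) * c I)
        * ind (τ I) t) ^ (p / q) ≤
      C * ∫ t in Set.Icc (0 : ℝ) 1, (∑ I ∈ L, c I * ind I t) ^ (p / q) := by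
  have hp : 0 < p := by linarith
  have hq0 : 0 < q := by linarith
  obtain ⟨C, hC, hb⟩ := op_bound hp h
  refine ⟨C ^ p, by positivity, ?_⟩
  intro L c hc
  set x : DyadicI → lp (fun _ : DyadicI => ℝ) (ENNReal.ofReal q) :=
    fun I => lp.single (E := fun _ : DyadicI => ℝ) (ENNReal.ofReal q) I (c I ^ (1 / q)) with hx
  have hb1 := hb L x
  unfold LpNormV at hb1
  have e1 : ∀ t, ‖∑ I ∈ L, haar I t • x I‖ ^ p = (∑ I ∈ L, c I * ind I t) ^ (p / q) := by
    intro t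
    simp only [hx, ← lp.single_smul, smul_eq_mul]
    rw [norm_lp_sum hq0 L]
    congr 1
    exact Finset.sum_congr rfl fun I _ => abs_rpow_haar hq0 (hc I) I t
  have e2 : ∀ t, ‖∑ J ∈ L.image τ, haar J t • rearrCoef τ p L x J‖ ^ p =
      (∑ I ∈ L, ((len I / len (τ I)) ^ (1 / (p / q)) * c I) * ind (τ I) t) ^ (p / q) := by
    intro t
    rw [Finset.sum_image (fun a _ b _ hab => hτ hab)]
    have : ∀ I ∈ L, haar (τ I) t • rearrCoef τ p L x (τ I) =
        lp.single (E := fun _ : DyadicI => ℝ) (ENNReal.ofReal q) I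
          (haar (τ I) t * ((len I / len (τ I)) ^ (1 / (p / q)) * c I) ^ (1 / q)) := by
      intro I hI
      have hr : 0 ≤ len I / len (τ I) := (div_pos (len_pos _) (len_pos _)).le
      unfold rearrCoef
      rw [sum_image_pick hτ L (fun I => (len I / len (τ I)) ^ (1 / p) • x I) hI]
      simp only [hx, ← lp.single_smul, smul_eq_mul]
      congr 2
      rw [Real.mul_rpow (by positivity) (hc I), ← Real.rpow_mul hr]
      congr 2
      field_simp
    rw [Finset.sum_congr rfl this, norm_lp_sum hq0 L]
    congr 1
    refine Finset.sum_congr rfl fun I _ => abs_rpow_haar hq0 ?_ _ t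
    have hr : 0 ≤ len I / len (τ I) := (div_pos (len_pos _) (len_pos _)).le
    exact mul_nonneg (Real.rpow_nonneg hr _) (hc I)
  simp only [e1, e2] at hb1
  have n2 : 0 ≤ ∫ t in Set.Icc (0 : ℝ) 1, (∑ I ∈ L, c I * ind I t) ^ (p / q) := by
    simp only [← e1]
    exact integral_nonneg fun t => Real.rpow_nonneg (norm_nonneg _) _
  have n1 : 0 ≤ ∫ t in Set.Icc (0 : ℝ) 1, (∑ I ∈ L, ((len I / len (τ I)) ^ (1 / (p / q)) * c I)
        * ind (τ I) t) ^ (p / q) := by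
    simp only [← e2]
    exact integral_nonneg fun t => Real.rpow_nonneg (norm_nonneg _) _
  have := Real.rpow_le_rpow (Real.rpow_nonneg n1 _) hb1 hp.le
  rwa [Real.mul_rpow hC (Real.rpow_nonneg n2 _), ← Real.rpow_mul n1, ← Real.rpow_mul n2,
    one_div_mul_cancel hp.ne', Real.rpow_one, Real.rpow_one] at this

end PartG

section PartH

/-! ### Telescoping along chains and Carleson sums -/

/-- sum over the intervals of `s` above `J` -/
def up (s : Finset DyadicI) (a : DyadicI → ℝ) (J : DyadicI) : ℝ :=
  ∑ K ∈ s.filter (fun K => toSet J ⊆ toSet K), a K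

def inc (φ : ℝ → ℝ) (s : Finset DyadicI) (a : DyadicI → ℝ) (J : DyadicI) : ℝ :=
  φ (up s a J) - φ (up s a J - a J)

lemma chain_tel (φ : ℝ → ℝ) (h0 : φ 0 = 0) (a : DyadicI → ℝ) (t : ℝ) (s : Finset DyadicI) :
    (∀ J ∈ s, t ∈ toSet J) → φ (∑ J ∈ s, a J) = ∑ J ∈ s, inc φ s a J := by
  induction s using Finset.induction_on_max_value (fun I : DyadicI => I.n) with
  | empty => intro _; simp [h0]
  | insert J0 s hJ0 hmax ih =>
    intro hch
    have hch' : ∀ J ∈ s, t ∈ toSet J := fun J hJ => hch J (Finset.mem_insert_of_mem hJ)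
    have htJ0 := hch J0 (Finset.mem_insert_self _ _)
    have h1 : up (insert J0 s) a J0 = a J0 + ∑ J ∈ s, a J := by
      unfold up
      rw [Finset.filter_true_of_mem, Finset.sum_insert hJ0]
      intro K hK
      rcases Finset.mem_insert.1 hK with rfl | hK
      · exact subset_rfl
      · exact toSet_sub htJ0 (hch' K hK) (hmax K hK)
    have h2 : ∀ J ∈ s, up (insert J0 s) a J = up s a J := by
      intro J hJ
      unfold up
      rw [Finset.filter_insert, if_neg]
      intro hsub
      have hn := n_le_of_sub hsub
      have := eq_of_mem htJ0 (hch' J hJ) (le_antisymm (hmax J hJ) hn)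
      exact hJ0 (this ▸ hJ)
    rw [Finset.sum_insert hJ0, Finset.sum_insert hJ0]
    have h3 : ∑ J ∈ s, inc φ (insert J0 s) a J = ∑ J ∈ s, inc φ s a J :=
      Finset.sum_congr rfl fun J hJ => by unfold inc; rw [h2 J hJ]
    rw [h3, ← ih hch']
    unfold inc
    rw [h1, add_sub_cancel_left]
    ring

lemma tel_gen (φ : ℝ → ℝ) (h0 : φ 0 = 0) (a : DyadicI → ℝ) (t : ℝ) (s s' : Finset DyadicI)
    (hs : s' ⊆ s) (hup : ∀ J ∈ s', ∀ K ∈ s, toSet J ⊆ toSet K → K ∈ s')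
    (ht : ∀ J ∈ s', t ∈ toSet J) : φ (∑ J ∈ s', a J) = ∑ J ∈ s', inc φ s a J := by
  rw [chain_tel φ h0 a t s' ht]
  refine Finset.sum_congr rfl fun J hJ => ?_
  have : up s' a J = up s a J := by
    unfold up
    refine Finset.sum_congr ?_ fun _ _ => rfl
    ext K
    simp only [Finset.mem_filter]
    exact ⟨fun h => ⟨hs h.1, h.2⟩, fun h => ⟨hup J hJ K h.1 h.2, h.2⟩⟩
  unfold inc
  rw [this]

lemma sum_ind (s : Finset DyadicI) (a : DyadicI → ℝ) (t : ℝ) :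
    ∑ J ∈ s, a J * ind J t = ∑ J ∈ s.filter (fun J => t ∈ toSet J), a J := by
  rw [Finset.sum_filter]
  refine Finset.sum_congr rfl fun J _ => ?_
  rw [ind_eq]; split_ifs <;> simp

lemma tel_point (φ : ℝ → ℝ) (h0 : φ 0 = 0) (a : DyadicI → ℝ) (t : ℝ) (s : Finset DyadicI) :
    φ (∑ J ∈ s, a J * ind J t) = ∑ J ∈ s, inc φ s a J * ind J t := by
  rw [sum_ind, sum_ind]
  refine tel_gen φ h0 a t s _ (Finset.filter_subset _ _) ?_ ?_
  · intro J hJ K hK hJK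
    simp only [Finset.mem_filter] at hJ ⊢
    exact ⟨hK, hJK hJ.2⟩
  · intro J hJ
    exact (Finset.mem_filter.1 hJ).2

lemma tel_up (φ : ℝ → ℝ) (h0 : φ 0 = 0) (a : DyadicI → ℝ) (J : DyadicI) (s : Finset DyadicI) :
    φ (up s a J) = ∑ K ∈ s.filter (fun K => toSet J ⊆ toSet K), inc φ s a K := by
  refine tel_gen φ h0 a (lep J) s _ (Finset.filter_subset _ _) ?_ ?_
  · intro K hK L hL hKL
    simp only [Finset.mem_filter] at hK ⊢
    exact ⟨hL, hK.2.trans hKL⟩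
  · intro K hK
    exact (Finset.mem_filter.1 hK).2 (lep_mem J)

lemma av_phi (φ : ℝ → ℝ) (h0 : φ 0 = 0) (a : DyadicI → ℝ) (s : Finset DyadicI) {N : ℕ}
    (hN : ∀ I ∈ s, I.n ≤ N) :
    av N (fun t => φ (∑ J ∈ s, a J * ind J t)) = ∑ J ∈ s, inc φ s a J * len J := by
  simp only [tel_point φ h0]
  exact av_sum_ind s hN _

lemma up_sub_nonneg {s : Finset DyadicI} {a : DyadicI → ℝ} (ha : ∀ J, 0 ≤ a J) {J : DyadicI}
    (hJ : J ∈ s) : 0 ≤ up s a J - a J := by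
  have : a J ≤ up s a J := Finset.single_le_sum (f := a) (fun K _ => ha K)
    (Finset.mem_filter.2 ⟨hJ, subset_rfl⟩)
  linarith

lemma carleson_sum {φ : ℝ → ℝ} (h0 : φ 0 = 0) (hφ : ∀ x y, 0 ≤ x → x ≤ y → φ x ≤ φ y)
    {a b : DyadicI → ℝ} (ha : ∀ J, 0 ≤ a J) (s : Finset DyadicI) {C : ℝ}
    (hb : ∀ K, ∑ J ∈ s.filter (fun J => toSet J ⊆ toSet K), b J * len J ≤ C * len K)
    {N : ℕ} (hN : ∀ I ∈ s, I.n ≤ N) :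
    ∑ J ∈ s, b J * len J * φ (up s a J) ≤ C * av N (fun t => φ (∑ J ∈ s, a J * ind J t)) := by
  rw [av_phi φ h0 a s hN]
  simp only [tel_up φ h0, Finset.sum_filter, Finset.mul_sum]
  rw [Finset.sum_comm]
  refine Finset.sum_le_sum fun K hK => ?_
  have hinc : 0 ≤ inc φ s a K := by
    unfold inc
    have := hφ (up s a K - a K) (up s a K) (up_sub_nonneg ha hK) (by linarith [ha K])
    linarith
  have := mul_le_mul_of_nonneg_left (hb K) hinc
  rw [Finset.sum_filter, Finset.mul_sum] at this
  refine le_trans (le_of_eq ?_) (this.trans (le_of_eq (by ring)))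
  refine Finset.sum_congr rfl fun J _ => ?_
  split_ifs <;> ring

/-- dual Carleson embedding -/
lemma dual_carleson {r : ℝ} (hr : 1 < r) {b g : DyadicI → ℝ} (hb0 : ∀ J, 0 ≤ b J)
    (hg0 : ∀ J, 0 ≤ g J) (s : Finset DyadicI)
    (hb : ∀ K, ∑ J ∈ s.filter (fun J => toSet J ⊆ toSet K), b J * len J ≤ len K)
    {N : ℕ} (hN : ∀ I ∈ s, I.n ≤ N) :
    av N (fun t => (∑ J ∈ s, (b J * g J) * ind J t) ^ r) ≤
      r ^ r * ∑ J ∈ s, b J * len J * g J ^ r := by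
  have hr0 : 0 < r := by linarith
  have ha : ∀ J, 0 ≤ b J * g J := fun J => mul_nonneg (hb0 J) (hg0 J)
  have h0 : (0 : ℝ) ^ r = 0 := Real.zero_rpow hr0.ne'
  have h1 := carleson_sum (φ := fun x => x ^ r) h0
    (fun x y hx hxy => Real.rpow_le_rpow hx hxy hr0.le) ha s (C := 1) (by simpa using hb) hN
  rw [one_mul] at h1
  have h2 := av_phi (fun x => x ^ r) h0 (fun J => b J * g J) s hN
  set Y := av N (fun t => (∑ J ∈ s, (b J * g J) * ind J t) ^ r) with hY
  have h3 : ∑ J ∈ s, inc (fun x => x ^ r) s (fun J => b J * g J) J * len J ≤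
      ∑ J ∈ s, (r ^ r / r * (b J * len J * g J ^ r) +
        (1 - 1 / r) * (b J * len J * (up s (fun J => b J * g J) J) ^ r)) := by
    refine Finset.sum_le_sum fun J hJ => ?_
    have hl := len_pos J
    have hu := up_sub_nonneg ha hJ
    unfold inc
    simp only
    set u := up s (fun J => b J * g J) J with hu'
    have hu0 : 0 ≤ u := by linarith [ha J]
    have y1 := young_aux hr hu hu0
    have y2 := young_aux hr (mul_nonneg hr0.le (hg0 J)) hu0
    rw [Real.mul_rpow hr0.le (hg0 J)] at y2
    have hur : u * u ^ (r - 1) = u ^ r := by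
      rcases hu0.eq_or_lt with h | h
      · rw [← h, h0, zero_mul]
      · rw [← Real.rpow_one_add' hu0 (by linarith)]; congr 1; ring
    have y3 : r * ((u - b J * g J) * u ^ (r - 1)) ≤ (u - b J * g J) ^ r + (r - 1) * u ^ r := by
      refine (mul_le_mul_of_nonneg_left y1 hr0.le).trans (le_of_eq ?_)
      field_simp
    have y4 : u ^ r - (u - b J * g J) ^ r ≤ b J * (r * g J * u ^ (r - 1)) := by
      rw [sub_mul, hur] at y3
      linarith
    have y5 := y4.trans (mul_le_mul_of_nonneg_left y2 (hb0 J))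
    refine (mul_le_mul_of_nonneg_right y5 hl.le).trans (le_of_eq ?_)
    ring
  rw [Finset.sum_add_distrib, ← Finset.mul_sum, ← Finset.mul_sum, ← h2] at h3
  have h4 : 0 ≤ 1 - 1 / r := by
    rw [sub_nonneg, div_le_one hr0]; exact hr.le
  have h5 := h3.trans (add_le_add le_rfl (mul_le_mul_of_nonneg_left h1 h4))
  have h6 : Y / r ≤ (r ^ r * ∑ J ∈ s, b J * len J * g J ^ r) / r := by
    have e1 : (1 - 1 / r) * Y = Y - Y / r := by ring
    have e2 : r ^ r / r * ∑ J ∈ s, b J * len J * g J ^ r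
      = (r ^ r * ∑ J ∈ s, b J * len J * g J ^ r) / r := by ring
    linarith
  exact (div_le_div_iff_of_pos_right hr0).1 h6

/-- Fefferman's inequality -/
lemma fefferman {α γ : DyadicI → ℝ} (s : Finset DyadicI) {C : ℝ}
    (hb : ∀ K, ∑ J ∈ s.filter (fun J => toSet J ⊆ toSet K), γ J ^ 2 * len J ≤ C * len K)
    {N : ℕ} (hN : ∀ I ∈ s, I.n ≤ N) :
    ∑ J ∈ s, α J * γ J * len J ≤
      (1 + C / 2) * av N (fun t => Real.sqrt (∑ J ∈ s, α J ^ 2 * ind J t)) := by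
  have ha : ∀ J, 0 ≤ α J ^ 2 := fun J => sq_nonneg _
  have h1 := carleson_sum (φ := Real.sqrt) Real.sqrt_zero
    (fun x y _ hxy => Real.sqrt_le_sqrt hxy) ha s hb hN
  have h2 := av_phi Real.sqrt Real.sqrt_zero (fun J => α J ^ 2) s hN
  have h3 : ∑ J ∈ s, α J * γ J * len J ≤
      ∑ J ∈ s, (inc Real.sqrt s (fun J => α J ^ 2) J * len J +
        1 / 2 * (γ J ^ 2 * len J * Real.sqrt (up s (fun J => α J ^ 2) J))) := by
    refine Finset.sum_le_sum fun J hJ => ?_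
    have hl := len_pos J
    have hu := up_sub_nonneg ha hJ
    unfold inc
    simp only
    set u := up s (fun J => α J ^ 2) J with hu'
    have hu0 : 0 ≤ u := by linarith [ha J]
    have s1 := Real.sq_sqrt hu0
    have s2 := Real.sq_sqrt hu
    have hle : Real.sqrt (u - α J ^ 2) ≤ Real.sqrt u := Real.sqrt_le_sqrt (by linarith [ha J])
    have n1 := Real.sqrt_nonneg u
    have n2 := Real.sqrt_nonneg (u - α J ^ 2)
    set p1 := Real.sqrt u
    set p2 := Real.sqrt (u - α J ^ 2)
    have hα : α J ^ 2 ≤ 2 * p1 * (p1 - p2) := by nlinarith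
    have hk : α J * γ J ≤ (p1 - p2) + 1 / 2 * (γ J ^ 2 * p1) := by
      have hn : 0 ≤ (p1 - p2) + 1 / 2 * (γ J ^ 2 * p1) := by
        have : 0 ≤ p1 - p2 := by linarith
        positivity
      refine le_of_sq_le_sq ?_ hn
      have := mul_le_mul_of_nonneg_right hα (sq_nonneg (γ J))
      nlinarith [sq_nonneg ((p1 - p2) - 1 / 2 * (γ J ^ 2 * p1))]
    have := mul_le_mul_of_nonneg_right hk hl.le
    linarith
  rw [Finset.sum_add_distrib, ← Finset.mul_sum, ← h2] at h3
  linarith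

lemma av_cs (N : ℕ) (I : DyadicI) (h : ℝ → ℝ) :
    (av N (fun t => ind I t * h t)) ^ 2 ≤ av N (ind I) * av N (fun t => ind I t * h t ^ 2) := by
  unfold av
  have hi : ∀ t, ind I t ^ 2 = ind I t := by
    intro t; rw [ind_eq]; split_ifs <;> norm_num
  have := Finset.sum_mul_sq_le_sq_mul_sq (Finset.range (2 ^ N)) (fun m => ind I (gp N m))
    (fun m => ind I (gp N m) * h (gp N m))
  simp only [mul_pow, hi] at this
  have e : ∀ m, ind I (gp N m) * (ind I (gp N m) * h (gp N m)) = ind I (gp N m) * h (gp N m) := by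
    intro m; rw [← mul_assoc, ← sq, hi]
  simp only [e] at this
  rw [div_pow, div_mul_div_comm, ← sq]
  gcongr

/-- the norming BMO function -/
lemma norming (L : Finset DyadicI) (A : DyadicI → ℝ) {N : ℕ} (hN : ∀ I ∈ L, I.n ≤ N) :
    ∃ g : DyadicI → ℝ,
      (∀ K, ∑ I ∈ L.filter (fun I => toSet I ⊆ toSet K), g I ^ 2 * len I ≤ len K) ∧
      av N (fun t => Real.sqrt (∑ I ∈ L, A I ^ 2 * ind I t)) = ∑ I ∈ L, A I * g I * len I := by
  set S : ℝ → ℝ := fun t => Real.sqrt (∑ I ∈ L, A I ^ 2 * ind I t) with hS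
  have hsum0 : ∀ (M : Finset DyadicI) t, 0 ≤ ∑ I ∈ M, A I ^ 2 * ind I t := fun M t =>
    Finset.sum_nonneg fun I _ => mul_nonneg (sq_nonneg _) (ind_nonneg _ _)
  have hSsq : ∀ t, S t ^ 2 = ∑ I ∈ L, A I ^ 2 * ind I t := fun t => Real.sq_sqrt (hsum0 L t)
  refine ⟨fun I => A I * av N (fun t => ind I t * (S t)⁻¹) / len I, ?_, ?_⟩
  · -- first for `K` of any generation, using a finer grid
    intro K
    by_cases hne : ∃ I ∈ L, toSet I ⊆ toSet K
    swap
    · rw [Finset.filter_false_of_mem (fun I hI h => hne ⟨I, hI, h⟩), Finset.sum_empty]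
      exact (len_pos K).le
    obtain ⟨I0, hI0, hI0K⟩ := hne
    have hKN : K.n ≤ N := (n_le_of_sub hI0K).trans (hN I0 hI0)
    have h1 : ∑ I ∈ L.filter (fun I => toSet I ⊆ toSet K),
        (A I * av N (fun t => ind I t * (S t)⁻¹) / len I) ^ 2 * len I ≤
        ∑ I ∈ L.filter (fun I => toSet I ⊆ toSet K),
          av N (fun t => A I ^ 2 * (ind I t * (S t)⁻¹ ^ 2)) := by
      refine Finset.sum_le_sum fun I hI => ?_
      have hl := len_pos I
      have hc := av_cs N I (fun t => (S t)⁻¹)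
      rw [av_ind (hN I (Finset.mem_filter.1 hI).1)] at hc
      rw [av_const_mul]
      have e : (A I * av N (fun t => ind I t * (S t)⁻¹) / len I) ^ 2 * len I =
        A I ^ 2 * ((av N (fun t => ind I t * (S t)⁻¹)) ^ 2 / len I) := by
        field_simp
      rw [e]
      refine mul_le_mul_of_nonneg_left ?_ (sq_nonneg _)
      rw [div_le_iff₀ hl]
      linarith
    refine h1.trans ?_
    rw [← av_sum, ← av_ind hKN]
    refine av_mono fun t _ => ?_
    simp only [← mul_assoc]
    rw [← Finset.sum_mul]
    by_cases htK : t ∈ toSet K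
    · rw [ind_eq K, if_pos htK]
      have hle : ∑ I ∈ L.filter (fun I => toSet I ⊆ toSet K), A I ^ 2 * ind I t ≤ S t ^ 2 := by
        rw [hSsq]
        exact Finset.sum_le_sum_of_subset_of_nonneg (Finset.filter_subset _ _)
          fun I _ _ => mul_nonneg (sq_nonneg _) (ind_nonneg _ _)
      refine (mul_le_mul_of_nonneg_right hle (sq_nonneg _)).trans ?_
      rw [← mul_pow]
      rcases eq_or_ne (S t) 0 with h | h
      · simp [h]
      · simp [h]
    · rw [ind_eq K, if_neg htK, Finset.sum_eq_zero, zero_mul]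
      intro I hI
      rw [ind_eq, if_neg (fun h => htK ((Finset.mem_filter.1 hI).2 h)), mul_zero]
  · have h1 : ∀ t, S t = ∑ I ∈ L, A I ^ 2 * (ind I t * (S t)⁻¹) := by
      intro t
      simp only [← mul_assoc]
      rw [← Finset.sum_mul, ← hSsq]
      rcases eq_or_ne (S t) 0 with h | h
      · simp [h]
      · field_simp
    rw [av_congr (fun t _ => h1 t), av_sum]
    refine Finset.sum_congr rfl fun I _ => ?_
    rw [av_const_mul]
    have hl := (len_pos I).ne'
    field_simp

end PartH

section PartK

/-! ### Transfer of Carleson families and conclusion -/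

lemma step_comp_sum {N : ℕ} {ι : Type*} (L : Finset ι) (σ : ι → DyadicI) (c : ι → ℝ) (φ : ℝ → ℝ)
    (h : ∀ I ∈ L, (σ I).n ≤ N) : Step N (fun t => φ (∑ I ∈ L, c I * ind (σ I) t)) := by
  intro t t' ht ht' htt
  show φ _ = φ _
  congr 1
  refine Finset.sum_congr rfl fun I hI => ?_
  rw [step_ind (h I hI) t t' ht ht' htt]

lemma transfer {r C : ℝ} (hr : 1 < r) (hC : 0 ≤ C) {τ : DyadicI → DyadicI}
    (h : ∀ (L : Finset DyadicI) (c : DyadicI → ℝ), (∀ I, 0 ≤ c I) →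
      ∫ t in Set.Icc (0 : ℝ) 1, (∑ I ∈ L, ((len I / len (τ I)) ^ (1 / r) * c I)
        * ind (τ I) t) ^ r ≤
      C * ∫ t in Set.Icc (0 : ℝ) 1, (∑ I ∈ L, c I * ind I t) ^ r) :
    ∃ C' : ℝ, 0 ≤ C' ∧ ∀ (L : Finset DyadicI) (b : DyadicI → ℝ), (∀ I, 0 ≤ b I) →
      (∀ K, ∑ J ∈ L.filter (fun J => toSet J ⊆ toSet K), b J * len J ≤ len K) →
      ∀ K, ∑ I ∈ L.filter (fun I => toSet (τ I) ⊆ toSet K), b I * len (τ I) ≤ C' * len K := by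
  have hr0 : 0 < r := by linarith
  have hr1 : r - 1 ≠ 0 := by linarith
  set M : ℝ := C * r ^ r / r with hM
  have hM0 : 0 ≤ M := by positivity
  set w : ℝ := (M + 1) ^ (1 / (r - 1)) with hw
  have hw0 : 0 ≤ w := by positivity
  have hw1 : w ^ (r - 1) = M + 1 := by
    rw [hw, ← Real.rpow_mul (by positivity), one_div_mul_cancel hr1, Real.rpow_one]
  refine ⟨w ^ r, by positivity, ?_⟩
  intro L b hb0 hb K
  set LK := L.filter (fun I => toSet (τ I) ⊆ toSet K) with hLK
  have hsub : LK ⊆ L := Finset.filter_subset _ _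
  have hK : ∀ I ∈ LK, toSet (τ I) ⊆ toSet K := fun I hI => (Finset.mem_filter.1 hI).2
  obtain ⟨N1, hN1⟩ := exists_level LK
  obtain ⟨N2, hN2⟩ := exists_level (LK.image τ)
  set N := max (max N1 N2) K.n with hNdef
  have hNI : ∀ I ∈ LK, I.n ≤ N := fun I hI =>
    (hN1 I hI).le.trans ((le_max_left _ _).trans (le_max_left _ _))
  have hNτ : ∀ I ∈ LK, (τ I).n ≤ N := fun I hI =>
    (hN2 _ (Finset.mem_image_of_mem τ hI)).le.trans ((le_max_right _ _).trans (le_max_left _ _))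
  have hNK : K.n ≤ N := le_max_right _ _
  set X := ∑ I ∈ LK, b I * len (τ I) with hX
  set g : DyadicI → ℝ := fun I => (len (τ I) / len I) ^ (1 / r) with hg
  have hq : ∀ I, 0 < len (τ I) / len I := fun I => div_pos (len_pos _) (len_pos _)
  have hg0 : ∀ I, 0 ≤ g I := fun I => Real.rpow_nonneg (hq I).le _
  have hb' : ∀ K, ∑ J ∈ LK.filter (fun J => toSet J ⊆ toSet K), b J * len J ≤ len K := by
    intro K'
    refine le_trans ?_ (hb K')
    exact Finset.sum_le_sum_of_subset_of_nonneg (Finset.filter_subset_filter _ hsub)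
      fun I _ _ => mul_nonneg (hb0 I) (len_pos I).le
  have h1 := h LK (fun I => b I * g I) fun I => mul_nonneg (hb0 I) (hg0 I)
  have h2 := dual_carleson hr hb0 hg0 LK hb' hNI
  have e0 : ∀ I, (len I / len (τ I)) ^ (1 / r) * (b I * g I) = b I := by
    intro I
    have : (len I / len (τ I)) ^ (1 / r) * g I = 1 := by
      rw [hg, ← Real.mul_rpow (div_pos (len_pos _) (len_pos _)).le (hq I).le,
        div_mul_div_cancel₀ (len_pos _).ne', div_self (len_pos _).ne', Real.one_rpow]
    calc _ = b I * ((len I / len (τ I)) ^ (1 / r) * g I) := by ring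
      _ = b I := by rw [this, mul_one]
  simp only [e0] at h1
  rw [integral_step (step_comp_sum LK τ b (fun x => x ^ r) hNτ),
    integral_step (show Step N (fun t => (∑ I ∈ LK, b I * g I * ind I t) ^ r) from
      step_comp_sum LK id (fun I => b I * g I) (fun x => x ^ r) hNI)] at h1
  have e1 : ∑ J ∈ LK, b J * len J * g J ^ r = X := by
    refine Finset.sum_congr rfl fun I _ => ?_
    rw [hg, ← Real.rpow_mul (hq I).le, one_div_mul_cancel hr0.ne', Real.rpow_one, mul_assoc,
      mul_div_cancel₀ _ (len_pos I).ne']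
  rw [e1] at h2
  have h3 : av N (fun t => (∑ I ∈ LK, b I * ind (τ I) t) ^ r) ≤ C * (r ^ r * X) :=
    h1.trans (mul_le_mul_of_nonneg_left h2 hC)
  have e2 : av N (fun t => ∑ I ∈ LK, b I * ind (τ I) t) = X := by
    rw [av_sum]
    refine Finset.sum_congr rfl fun I hI => ?_
    rw [av_const_mul, av_ind (hNτ I hI)]
  have hX0 : 0 ≤ X := Finset.sum_nonneg fun I _ => mul_nonneg (hb0 I) (len_pos _).le
  have h4 : av N (fun t => (∑ I ∈ LK, b I * ind (τ I) t) * (M + 1)) ≤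
      av N (fun t => ∑ i : Bool, if i then r⁻¹ * (∑ I ∈ LK, b I * ind (τ I) t) ^ r
        else w ^ r * ind K t) := by
    refine av_mono fun t _ => ?_
    simp only [Fintype.sum_bool, if_true, Bool.false_eq_true, if_false]
    have hH0 : 0 ≤ ∑ I ∈ LK, b I * ind (τ I) t :=
      Finset.sum_nonneg fun I _ => mul_nonneg (hb0 I) (ind_nonneg _ _)
    by_cases ht : t ∈ toSet K
    · have hy := young_aux hr hH0 hw0
      rw [hw1] at hy
      rw [ind_eq, if_pos ht, mul_one]
      have : (1 - 1 / r) * w ^ r ≤ w ^ r := by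
        have : 0 ≤ 1 / r * w ^ r := by positivity
        linarith
      rw [div_eq_inv_mul] at hy
      linarith
    · have : ∑ I ∈ LK, b I * ind (τ I) t = 0 := by
        refine Finset.sum_eq_zero fun I hI => ?_
        rw [ind_eq, if_neg (fun hh => ht (hK I hI hh)), mul_zero]
      rw [this, zero_mul, ind_eq, if_neg ht, Real.zero_rpow hr0.ne']
      simp
  rw [av_sum, Fintype.sum_bool] at h4
  simp only [if_true, Bool.false_eq_true, if_false] at h4
  rw [av_mul_const, e2, av_const_mul, av_const_mul, av_ind hNK] at h4
  have h5 : r⁻¹ * av N (fun t => (∑ I ∈ LK, b I * ind (τ I) t) ^ r) ≤ M * X := by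
    refine (mul_le_mul_of_nonneg_left h3 (by positivity)).trans (le_of_eq ?_)
    rw [hM]; field_simp
  nlinarith

lemma HpNormS_one (s : Finset DyadicI) (a : DyadicI → ℝ) {N : ℕ} (hN : ∀ I ∈ s, I.n ≤ N) :
    HpNormS 1 s a = av N (fun t => Real.sqrt (∑ I ∈ s, a I ^ 2 * ind I t)) := by
  unfold HpNormS
  simp only [Real.rpow_one, div_one]
  exact integral_step (step_comp_sum s id (fun I => a I ^ 2) Real.sqrt hN)

lemma h1_bound {C' : ℝ} {τ : DyadicI → DyadicI} (hτ : Function.Injective τ) (hC : 0 ≤ C')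
    (h : ∀ (L : Finset DyadicI) (b : DyadicI → ℝ), (∀ I, 0 ≤ b I) →
      (∀ K, ∑ J ∈ L.filter (fun J => toSet J ⊆ toSet K), b J * len J ≤ len K) →
      ∀ K, ∑ I ∈ L.filter (fun I => toSet (τ I) ⊆ toSet K), b I * len (τ I) ≤ C' * len K) :
    h1InvOpNorm τ < ⊤ := by
  refine lt_of_le_of_lt (b := ENNReal.ofReal (1 + C' / 2)) ?_ ENNReal.ofReal_lt_top
  unfold h1InvOpNorm
  refine iSup_le fun L => iSup_le fun a => iSup_le fun ha => ENNReal.ofReal_le_ofReal ?_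
  set α : DyadicI → ℝ := fun J => ∑ I ∈ L, if τ I = J then a I else 0 with hα
  obtain ⟨N1, hN1⟩ := exists_level L
  obtain ⟨N2, hN2⟩ := exists_level (L.image τ)
  have hN1' : ∀ I ∈ L, I.n ≤ N1 := fun I hI => (hN1 I hI).le
  have hN2' : ∀ I ∈ L.image τ, I.n ≤ N2 := fun I hI => (hN2 I hI).le
  rw [HpNormS_one _ _ hN2'] at ha
  rw [HpNormS_one _ _ hN1']
  obtain ⟨g, hg, hgn⟩ := norming L (fun I => (len (τ I) / len I) * a I) hN1'
  rw [hgn]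
  set γ : DyadicI → ℝ := fun J => ∑ I ∈ L, if τ I = J then g I else 0 with hγ
  have hα1 : ∀ I ∈ L, α (τ I) = a I := fun I hI => sum_image_pick hτ L a hI
  have hγ1 : ∀ I ∈ L, γ (τ I) = g I := fun I hI => sum_image_pick hτ L g hI
  have hinj : Set.InjOn τ L := hτ.injOn
  have hb : ∀ K, ∑ J ∈ (L.image τ).filter (fun J => toSet J ⊆ toSet K), γ J ^ 2 * len J
      ≤ C' * len K := by
    intro K
    refine le_trans (le_of_eq ?_) (h L (fun I => g I ^ 2) (fun I => sq_nonneg _) hg K)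
    rw [Finset.sum_filter, Finset.sum_image (fun a _ b _ hab => hτ hab), Finset.sum_filter]
    refine Finset.sum_congr rfl fun I hI => ?_
    rw [hγ1 I hI]
  have hf := fefferman (α := α) (L.image τ) hb hN2'
  rw [Finset.sum_image (fun a _ b _ hab => hτ hab)] at hf
  have e : ∑ I ∈ L, (len (τ I) / len I) * a I * g I * len I =
      ∑ I ∈ L, α (τ I) * γ (τ I) * len (τ I) := by
    refine Finset.sum_congr rfl fun I hI => ?_
    rw [hα1 I hI, hγ1 I hI]
    have := (len_pos I).ne'
    field_simp
  rw [e]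
  refine hf.trans ?_
  have : 0 ≤ 1 + C' / 2 := by positivity
  calc _ ≤ (1 + C' / 2) * 1 := mul_le_mul_of_nonneg_left ha this
    _ = _ := mul_one _

end PartK

/-- Let `1 < p ≤ 2` and let `τ : D → D` be injective. If for every
Banach space `E` with the UMD property the operator `T_{τ,p} ⊗ Id_E` is bounded on
`L^p_E`, then the inverse rearrangement operator is bounded on dyadic `H¹`, i.e.
`‖T_{τ,1}⁻¹‖₁ < ∞`. -/
theorem statement12 (p : ℝ) (hp1 : 1 < p) (hp2 : p ≤ 2)
    (τ : DyadicI → DyadicI) (hτ : Function.Injective τ)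
    (h : ∀ (E : Type) [NormedAddCommGroup E] [NormedSpace ℝ E] [CompleteSpace E],
      IsUMD E → lpOpNorm τ p E < ⊤) :
    h1InvOpNorm τ < ⊤ := by
  have hq : 1 < (1 + p) / 2 := by linarith
  have hqp : (1 + p) / 2 < p := by linarith
  haveI : Fact (1 ≤ ENNReal.ofReal ((1 + p) / 2)) :=
    ⟨by rw [← ENNReal.ofReal_one]; exact ENNReal.ofReal_le_ofReal hq.le⟩
  have h1 := h (lp (fun _ : DyadicI => ℝ) (ENNReal.ofReal ((1 + p) / 2))) (isUMD_lp hq)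
  obtain ⟨C, hC, hb⟩ := scalar_bound hq hqp hτ h1
  have hr : 1 < p / ((1 + p) / 2) := by rw [lt_div_iff₀ (by linarith)]; linarith
  obtain ⟨C', hC', hb'⟩ := transfer hr hC hb
  exact h1_bound hτ hC' hb'
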